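/- arXiv:2304.13695 — 11 statements merged into one kernel-verified Lean document; each statement's English description precedes it below -/
import Mathlib

section
/- Let ℱ = {F₁,…,F_m} be a finite set of graphs, let ℓ be the maximum number of connected components of a graph in ℱ, and let c be the maximum number of vertices in a connected component of a graph in ℱ. Set α_ℱ = m·ℓ·c². Then for every finite simple graph G there exists ℱ' ∈ Conn(ℱ) such that opt(G,ℱ') ≤ opt(G,ℱ) + α_ℱ. -/
/-- `G` contains a subgraph isomorphic to `F` avoiding the vertex set `S`:
there is an injective map of the vertices of `F` into `V(G) \ S` carrying
edges of `F` to edges of `G`. -/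
def HasSubCopyAvoiding {α β : Type} (G : SimpleGraph α) (F : SimpleGraph β)
    (S : Finset α) : Prop :=
  ∃ f : β ↪ α, (∀ x, f x ∉ S) ∧ ∀ u v, F.Adj u v → G.Adj (f u) (f v)

/-- `S` is a solution for Subgraph Hitting on `(G, ℱ)`: after deleting `S`, the
graph `G` contains no subgraph isomorphic to a member of the family `F`. -/
def IsSubHitting {α ι : Type} {β : ι → Type} (G : SimpleGraph α)
    (F : ∀ i, SimpleGraph (β i)) (S : Finset α) : Prop :=
  ∀ i, ¬ HasSubCopyAvoiding G (F i) S

/-- `opt(G, ℱ)`: the minimum size of a solution for Subgraph Hitting on `(G, ℱ)`. -/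
noncomputable def optSub {α ι : Type} {β : ι → Type} (G : SimpleGraph α)
    (F : ∀ i, SimpleGraph (β i)) : ℕ :=
  sInf {n | ∃ S : Finset α, IsSubHitting G F S ∧ S.card = n}

open Classical in
theorem greedy_aux {α β : Type} [Fintype β] [Nonempty β] (G : SimpleGraph α)
    (F : SimpleGraph β) (ℓ c : ℕ) (hℓ : Nat.card F.ConnectedComponent ≤ ℓ)
    (hc : ∀ K : F.ConnectedComponent, K.supp.ncard ≤ c) (S : Finset α)
    (h : ∀ K : F.ConnectedComponent, ∀ X : Finset α, X.card ≤ ℓ * c →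
      HasSubCopyAvoiding G (F.induce K.supp) (S ∪ X)) :
    HasSubCopyAvoiding G F S := by
  obtain ⟨b⟩ := ‹Nonempty β›
  have hne : Nonempty α := by
    obtain ⟨f, -⟩ := h (F.connectedComponentMk b) ∅ (by simp)
    exact ⟨f ⟨b, rfl⟩⟩
  haveI : Fintype F.ConnectedComponent := Fintype.ofFinite _
  rw [Nat.card_eq_fintype_card] at hℓ
  have key : ∀ T : Finset F.ConnectedComponent, ∃ (f : β → α) (X : Finset α),
      X.card ≤ T.card * c ∧
      (∀ x, F.connectedComponentMk x ∈ T → f x ∈ X ∧ f x ∉ S) ∧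
      (∀ x y, F.connectedComponentMk x ∈ T → F.connectedComponentMk y ∈ T →
        f x = f y → x = y) ∧
      (∀ x y, F.connectedComponentMk x ∈ T → F.Adj x y → G.Adj (f x) (f y)) := by
    intro T
    induction T using Finset.induction_on with
    | empty => exact ⟨fun _ => hne.some, ∅, by simp⟩
    | insert K T hK ih =>
      obtain ⟨f, X, hX, hf, hinj, hadj⟩ := ih
      have hT : T.card ≤ ℓ := (Finset.card_le_univ T).trans hℓ
      obtain ⟨g, hg, hgadj⟩ := h K X (hX.trans (Nat.mul_le_mul_right c hT))
      have mem : ∀ x, F.connectedComponentMk x = K → x ∈ K.supp := fun x hx => hx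
      refine ⟨fun x => if hx : F.connectedComponentMk x = K then g ⟨x, hx⟩ else f x,
        X ∪ Finset.univ.image g, ?_, ?_, ?_, ?_⟩
      · rw [Finset.card_insert_of_notMem hK, Nat.add_mul, one_mul]
        refine (Finset.card_union_le _ _).trans (Nat.add_le_add hX ?_)
        refine Finset.card_image_le.trans ?_
        have := hc K
        rw [← Nat.card_coe_set_eq, Nat.card_eq_fintype_card] at this
        simpa using this
      · intro x hx
        by_cases hxK : F.connectedComponentMk x = K
        · have := hg ⟨x, hxK⟩
          simp only [hxK, dite_true]
          refine ⟨Finset.mem_union_right _ (Finset.mem_image_of_mem _ (Finset.mem_univ _)), ?_⟩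
          intro h'
          exact this (Finset.mem_union_left _ h')
        · have hxT := (Finset.mem_insert.1 hx).resolve_left hxK
          simp only [hxK, dite_false]
          exact ⟨Finset.mem_union_left _ (hf x hxT).1, (hf x hxT).2⟩
      · intro x y hx hy
        by_cases hxK : F.connectedComponentMk x = K <;>
          by_cases hyK : F.connectedComponentMk y = K <;>
          simp only [hxK, hyK, dite_true, dite_false] <;> intro he
        · exact congrArg Subtype.val (g.injective he)
        · have hyT := (Finset.mem_insert.1 hy).resolve_left hyK
          exact absurd (Finset.mem_union_right _ (he ▸ (hf y hyT).1)) (hg ⟨x, hxK⟩)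
        · have hxT := (Finset.mem_insert.1 hx).resolve_left hxK
          exact absurd (Finset.mem_union_right _ (he ▸ (hf x hxT).1)) (hg ⟨y, hyK⟩)
        · have hxT := (Finset.mem_insert.1 hx).resolve_left hxK
          have hyT := (Finset.mem_insert.1 hy).resolve_left hyK
          exact hinj x y hxT hyT he
      · intro x y hx hxy
        have hcc : F.connectedComponentMk x = F.connectedComponentMk y :=
          SimpleGraph.ConnectedComponent.sound hxy.reachable
        by_cases hxK : F.connectedComponentMk x = K
        · have hyK := hcc ▸ hxK
          simp only [hxK, hyK, dite_true]
          exact hgadj ⟨x, hxK⟩ ⟨y, hyK⟩ hxy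
        · have hyK : ¬ F.connectedComponentMk y = K := hcc ▸ hxK
          have hxT := (Finset.mem_insert.1 hx).resolve_left hxK
          simp only [hxK, hyK, dite_false]
          exact hadj x y hxT hxy
  obtain ⟨f, X, -, hf, hinj, hadj⟩ := key Finset.univ
  exact ⟨⟨f, fun x y => hinj x y (Finset.mem_univ _) (Finset.mem_univ _)⟩,
    fun x => (hf x (Finset.mem_univ _)).2, fun u v => hadj u v (Finset.mem_univ _)⟩

/-- if `ℓ` bounds the number of connected components of every `F ∈ ℱ`
and `c` bounds the number of vertices of every connected component of every `F ∈ ℱ`,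
then for every finite graph `G` there is a choice `comp` of one connected component of
each graph of `ℱ` (i.e. a member `ℱ' ∈ Conn(ℱ)`) such that
`opt(G, ℱ') ≤ opt(G, ℱ) + m·ℓ·c²`. -/
theorem stmt0 {ι : Type} [Fintype ι] {β : ι → Type} [∀ i, Fintype (β i)]
    [∀ i, Nonempty (β i)]
    (F : ∀ i, SimpleGraph (β i)) (ℓ c : ℕ)
    (hℓ : ∀ i, Nat.card (F i).ConnectedComponent ≤ ℓ)
    (hc : ∀ i, ∀ K : (F i).ConnectedComponent, K.supp.ncard ≤ c)
    {α : Type} [Fintype α] (G : SimpleGraph α) :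
    ∃ comp : ∀ i, (F i).ConnectedComponent,
      optSub G (fun i => (F i).induce (comp i).supp) ≤
        optSub G F + Fintype.card ι * ℓ * c ^ 2 := by
  classical
  have hmem : optSub G F ∈ {n | ∃ S : Finset α, IsSubHitting G F S ∧ S.card = n} := by
    refine Nat.sInf_mem ⟨_, Finset.univ, ?_, rfl⟩
    rintro i ⟨f, hf, -⟩
    exact hf (Classical.arbitrary _) (Finset.mem_univ _)
  obtain ⟨S, hS, hcard⟩ := hmem
  have key : ∀ i, ∃ K : (F i).ConnectedComponent, ∃ X : Finset α, X.card ≤ ℓ * c ∧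
      ¬ HasSubCopyAvoiding G ((F i).induce K.supp) (S ∪ X) := by
    intro i
    by_contra hcon
    push Not at hcon
    exact hS i (greedy_aux G (F i) ℓ c (hℓ i) (hc i) S hcon)
  choose K X hX hK using key
  refine ⟨K, ?_⟩
  have h1 : optSub G (fun i => (F i).induce (K i).supp) ≤
      (S ∪ Finset.univ.biUnion X).card := by
    refine Nat.sInf_le ⟨_, ?_, rfl⟩
    rintro i ⟨f, hf, hadj⟩
    refine hK i ⟨f, fun x hx => hf x ?_, hadj⟩
    exact Finset.union_subset_union_right
      (Finset.subset_biUnion_of_mem X (Finset.mem_univ i)) hx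
  refine h1.trans ((Finset.card_union_le _ _).trans ?_)
  rw [hcard]
  refine Nat.add_le_add_left ?_ _
  refine (Finset.card_biUnion_le_card_mul _ _ (ℓ * c) (fun i _ => hX i)).trans ?_
  rw [Finset.card_univ, mul_assoc]
  exact Nat.mul_le_mul_left _ (Nat.mul_le_mul_left _ (Nat.le_self_pow two_ne_zero c))
end

section
/- Let ℱ = {F₁,…,F_m} be a finite set of graphs, let ℓ be the maximum number of connected components of a graph in ℱ, and let c be the maximum number of vertices in a connected component of a graph in ℱ. Let d ≥ 1 and set α*_ℱ = m·ℓ²·c³·d. Then for every finite simple graph G of degeneracy at most d there exists ℱ' ∈ Conn(ℱ) such that opt*(G,ℱ') ≤ opt*(G,ℱ) + α*_ℱ. -/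
/-- `G` contains an induced subgraph isomorphic to `F` avoiding the vertex set `S`:
there is an injective map of the vertices of `F` into `V(G) \ S` such that
two vertices of `F` are adjacent iff their images are adjacent in `G`. -/
def HasIndCopyAvoiding {α β : Type} (G : SimpleGraph α) (F : SimpleGraph β)
    (S : Finset α) : Prop :=
  ∃ f : β ↪ α, (∀ x, f x ∉ S) ∧ ∀ u v, F.Adj u v ↔ G.Adj (f u) (f v)

/-- `S` is a solution for Induced Subgraph Hitting on `(G, ℱ)`. -/
def IsIndHitting {α ι : Type} {β : ι → Type} (G : SimpleGraph α)
    (F : ∀ i, SimpleGraph (β i)) (S : Finset α) : Prop :=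
  ∀ i, ¬ HasIndCopyAvoiding G (F i) S

/-- `opt*(G, ℱ)`: minimum size of a solution for Induced Subgraph Hitting on `(G, ℱ)`. -/
noncomputable def optInd {α ι : Type} {β : ι → Type} (G : SimpleGraph α)
    (F : ∀ i, SimpleGraph (β i)) : ℕ :=
  sInf {n | ∃ S : Finset α, IsIndHitting G F S ∧ S.card = n}

/-- `G` has degeneracy at most `d`: every subgraph with at least one vertex has a
vertex of degree at most `d`. -/
def DegeneracyLE {α : Type} (G : SimpleGraph α) (d : ℕ) : Prop :=
  ∀ H : G.Subgraph, H.verts.Nonempty → ∃ v ∈ H.verts, (H.neighborSet v).ncard ≤ d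

open Classical in
/-- Edge count of a degenerate graph (ordered pairs). -/
lemma pairs_bound {α : Type} [Fintype α] (G : SimpleGraph α) (d : ℕ)
    (hdeg : DegeneracyLE G d) (n : ℕ) : ∀ U : Finset α, U.card = n + 1 →
    ((U ×ˢ U).filter (fun e => G.Adj e.1 e.2)).card ≤ 2 * d * n := by
  induction n with
  | zero =>
    intro U hU
    obtain ⟨a, rfl⟩ := Finset.card_eq_one.1 (by simpa using hU)
    simp
  | succ n ih =>
    intro U hU
    have hne : U.Nonempty := by rw [← Finset.card_pos]; omega
    obtain ⟨v, hv, hvd⟩ := hdeg ((⊤ : G.Subgraph).induce (U : Set α)) (by simpa using hne)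
    have hvU : v ∈ U := by simpa using hv
    have hD : (U.filter (fun w => G.Adj v w)).card ≤ d := by
      rw [← Set.ncard_coe_finset]
      refine le_trans (Set.ncard_le_ncard ?_ (Set.toFinite _)) hvd
      intro w hw
      simp at hw
      simp [hw, hvU]
    have h1 := ih (U.erase v) (by rw [Finset.card_erase_of_mem hvU]; omega)
    have hsub : ((U ×ˢ U).filter (fun e => G.Adj e.1 e.2)) ⊆
        (((U.erase v) ×ˢ (U.erase v)).filter (fun e => G.Adj e.1 e.2)) ∪
        ((U.filter (fun w => G.Adj v w)).image (fun w => (v, w)) ∪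
         (U.filter (fun w => G.Adj v w)).image (fun w => (w, v))) := by
      rintro ⟨x, y⟩ h
      simp only [Finset.mem_filter, Finset.mem_product] at h
      obtain ⟨⟨hx, hy⟩, hxy⟩ := h
      simp only [Finset.mem_union, Finset.mem_filter, Finset.mem_product, Finset.mem_image,
        Finset.mem_erase, Prod.mk.injEq]
      by_cases hxv : x = v
      · subst hxv
        exact Or.inr (Or.inl ⟨y, ⟨hy, hxy⟩, rfl, rfl⟩)
      · by_cases hyv : y = v
        · subst hyv
          exact Or.inr (Or.inr ⟨x, ⟨hx, hxy.symm⟩, rfl, rfl⟩)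
        · exact Or.inl ⟨⟨⟨hxv, hx⟩, hyv, hy⟩, hxy⟩
    have h2 := Finset.card_le_card hsub
    have h3 := Finset.card_union_le (((U.erase v) ×ˢ (U.erase v)).filter (fun e => G.Adj e.1 e.2))
      ((U.filter (fun w => G.Adj v w)).image (fun w => (v, w)) ∪
         (U.filter (fun w => G.Adj v w)).image (fun w => (w, v)))
    have h4 := Finset.card_union_le ((U.filter (fun w => G.Adj v w)).image (fun w => (v, w)))
         ((U.filter (fun w => G.Adj v w)).image (fun w => (w, v)))
    have h5 := Finset.card_image_le (s := U.filter (fun w => G.Adj v w)) (f := fun w => (v, w))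
    have h6 := Finset.card_image_le (s := U.filter (fun w => G.Adj v w)) (f := fun w => (w, v))
    have : 2 * d * (n + 1) = 2 * d * n + d + d := by ring
    omega

open Classical in
/-- Number of functions with two prescribed values. -/
lemma two_values {J : Type} [Fintype J] (N : ℕ) (j j' : J) (hj : j ≠ j') (a a' : Fin N)
    (A : Finset (J → Fin N)) (hA : ∀ s ∈ A, s j = a ∧ s j' = a') :
    N * N * A.card ≤ N ^ Fintype.card J := by
  have : ((Finset.univ : Finset (Fin N × Fin N)) ×ˢ A).card ≤
      (Finset.univ : Finset (J → Fin N)).card := by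
    apply Finset.card_le_card_of_injOn
      (fun q => Function.update (Function.update q.2 j q.1.1) j' q.1.2)
    · intro _ _; simp
    · rintro ⟨⟨x, y⟩, s⟩ hs ⟨⟨x', y'⟩, s'⟩ hs' h
      simp only [Finset.coe_product, Set.mem_prod, Finset.mem_coe] at hs hs'
      have e1 := hA _ hs.2
      have e2 := hA _ hs'.2
      simp only at h e1 e2
      have k1 := congrFun h j
      have k2 := congrFun h j'
      simp [Function.update_of_ne hj] at k1 k2
      have : s = s' := by
        funext t
        by_cases t1 : t = j
        · subst t1; rw [e1.1, e2.1]
        by_cases t2 : t = j'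
        · subst t2; rw [e1.2, e2.2]
        have k3 := congrFun h t
        simpa [Function.update_of_ne t1, Function.update_of_ne t2] using k3
      simp [k1, k2, this]
  simpa [Finset.card_product] using this

open Classical in
/-- Independent choice of copies. -/
lemma choice_lemma {α : Type} [Fintype α] (G : SimpleGraph α) (d : ℕ) (hd : 1 ≤ d)
    (hdeg : DegeneracyLE G d) {J : Type} [Fintype J] (V : J → Type) [∀ j, Fintype (V j)]
    (c N : ℕ) (hc : ∀ j, Fintype.card (V j) ≤ c) (hN0 : 0 < N)
    (hN : d * Fintype.card J * c ≤ N)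
    (f : ∀ p : J × Fin N, V p.1 ↪ α)
    (hf : ∀ p q, p ≠ q → ∀ u v, f p u ≠ f q v) :
    ∃ s : J → Fin N, ∀ j j', j ≠ j' → ∀ u v, ¬ G.Adj (f (j, s j) u) (f (j', s j') v) := by
  by_contra hcon
  push Not at hcon
  set U : Finset α := Finset.univ.biUnion (fun p : J × Fin N => Finset.univ.image (f p)) with hU
  have hmem : ∀ p u, f p u ∈ U := by
    intro p u
    rw [hU]; simp only [Finset.mem_biUnion, Finset.mem_image, Finset.mem_univ, true_and]
    exact ⟨p, u, rfl⟩
  have hUc : U.card ≤ Fintype.card J * N * c := by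
    refine (Finset.card_biUnion_le_card_mul _ _ c ?_).trans ?_
    · intro p _
      exact Finset.card_image_le.trans (by simpa using hc p.1)
    · simp
  set P := (U ×ˢ U).filter (fun e => G.Adj e.1 e.2) with hP
  let R : (J → Fin N) → α × α → Prop := fun s e =>
    ∃ j j', j ≠ j' ∧ ∃ u v, e = (f (j, s j) u, f (j', s j') v)
  have hdc := Finset.sum_card_bipartiteAbove_eq_sum_card_bipartiteBelow R
    (s := (Finset.univ : Finset (J → Fin N))) (t := P)
  have hlow : ∀ s ∈ (Finset.univ : Finset (J → Fin N)), 2 ≤ (P.bipartiteAbove R s).card := by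
    intro s _
    obtain ⟨j, j', hj, u, v, hadj⟩ := hcon s
    refine Finset.one_lt_card.2 ⟨(f (j, s j) u, f (j', s j') v), ?_,
      (f (j', s j') v, f (j, s j) u), ?_, ?_⟩
    · simp only [Finset.mem_bipartiteAbove, hP, Finset.mem_filter, Finset.mem_product]
      exact ⟨⟨⟨hmem _ _, hmem _ _⟩, hadj⟩, j, j', hj, u, v, rfl⟩
    · simp only [Finset.mem_bipartiteAbove, hP, Finset.mem_filter, Finset.mem_product]
      exact ⟨⟨⟨hmem _ _, hmem _ _⟩, hadj.symm⟩, j', j, hj.symm, v, u, rfl⟩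
    · intro h
      exact hadj.ne (congrArg Prod.fst h)
  have hupp : ∀ e ∈ P, N * N * ((Finset.univ : Finset (J → Fin N)).bipartiteBelow R e).card
      ≤ N ^ Fintype.card J := by
    intro e _
    by_cases hne : ((Finset.univ : Finset (J → Fin N)).bipartiteBelow R e).Nonempty
    · obtain ⟨s, hs⟩ := hne
      obtain ⟨j, j', hj, u, v, he⟩ := ((Finset.mem_bipartiteBelow R).1 hs).2
      apply two_values N j j' hj (s j) (s j')
      intro s' hs'
      obtain ⟨i, i', hi, u', v', he'⟩ := ((Finset.mem_bipartiteBelow R).1 hs').2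
      rw [he, Prod.mk.injEq] at he'
      have q1 : (j, s j) = (i, s' i) := by
        by_contra hne
        exact hf _ _ hne _ _ he'.1
      have q2 : (j', s j') = (i', s' i') := by
        by_contra hne
        exact hf _ _ hne _ _ he'.2
      rw [Prod.mk.injEq] at q1 q2
      obtain ⟨rfl, q1⟩ := q1
      obtain ⟨rfl, q2⟩ := q2
      exact ⟨q1.symm, q2.symm⟩
    · rw [Finset.not_nonempty_iff_eq_empty] at hne
      simp [hne]
  have h1 := Finset.card_nsmul_le_sum _ _ _ hlow
  rw [hdc] at h1
  have h2 := Finset.sum_le_sum hupp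
  rw [← Finset.mul_sum] at h2
  simp only [Finset.sum_const, smul_eq_mul, Finset.card_univ, Fintype.card_fun,
    Fintype.card_fin] at h1 h2
  have hpos : 0 < N ^ Fintype.card J := pow_pos hN0 _
  have h3 : 2 * (N * N) ≤ P.card := by
    have := (Nat.mul_le_mul_left (N * N) h1).trans h2
    refine Nat.le_of_mul_le_mul_right ?_ hpos
    linarith
  have hPpos : 0 < P.card := lt_of_lt_of_le (by positivity) h3
  obtain ⟨e, he⟩ := Finset.card_pos.1 hPpos
  have hUpos : 0 < U.card := Finset.card_pos.2 ⟨e.1, by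
    rw [hP] at he; exact (Finset.mem_product.1 (Finset.mem_filter.1 he).1).1⟩
  have h4 := pairs_bound G d hdeg (U.card - 1) U (by omega)
  rw [← hP] at h4
  have h5 : 2 * d * (U.card - 1) < 2 * d * U.card :=
    Nat.mul_lt_mul_of_pos_left (by omega) (by omega)
  have h6 : 2 * d * U.card ≤ 2 * d * (Fintype.card J * N * c) := Nat.mul_le_mul_left _ hUc
  have h7 := Nat.mul_le_mul_left (2 * N) hN
  nlinarith

open Classical in
/-- Greedy packing. -/
lemma packing {α : Type} (G : SimpleGraph α) {I : Type} (V : I → Type)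
    [∀ j, Fintype (V j)] (H : ∀ j, SimpleGraph (V j)) (c B : ℕ)
    (hc : ∀ j, Fintype.card (V j) ≤ c) (S : Finset α)
    (hB : ∀ j, ∀ T : Finset α, T.card ≤ B → HasIndCopyAvoiding G (H j) (S ∪ T))
    (X : Finset I) : X.card * c ≤ B →
    ∃ f : ∀ p : I, V p ↪ α, (∀ p, (∀ x, f p x ∉ S) ∧ ∀ u v, (H p).Adj u v ↔
      G.Adj (f p u) (f p v)) ∧ ∀ p ∈ X, ∀ q ∈ X, p ≠ q → ∀ u v, f p u ≠ f q v := by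
  induction X using Finset.induction_on with
  | empty =>
    intro _
    choose f hf1 hf2 using fun j => hB j ∅ (by simp)
    exact ⟨f, fun p => ⟨fun x => by simpa using hf1 p x, hf2 p⟩, by simp⟩
  | insert p0 X hp0 ih =>
    intro hX
    rw [Finset.card_insert_of_notMem hp0] at hX
    have hX' : X.card * c ≤ B := le_trans (Nat.mul_le_mul_right _ (Nat.le_succ _)) hX
    obtain ⟨f, hf, hd⟩ := ih hX'
    obtain ⟨g, hg1, hg2⟩ := hB p0 (X.biUnion fun p => Finset.univ.image (f p))
      ((Finset.card_biUnion_le_card_mul _ _ c (fun p _ =>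
        Finset.card_image_le.trans (by simpa using hc p))).trans hX')
    have hg : ∀ q ∈ X, ∀ u v, g u ≠ f q v := by
      intro q hq u v h
      apply hg1 u
      rw [Finset.mem_union, Finset.mem_biUnion]
      exact Or.inr ⟨q, hq, Finset.mem_image.2 ⟨v, Finset.mem_univ _, h.symm⟩⟩
    refine ⟨Function.update f p0 g, ?_, ?_⟩
    · intro p
      by_cases hp : p = p0
      · subst hp
        simp only [Function.update_self]
        exact ⟨fun x hx => hg1 x (Finset.mem_union_left _ hx), hg2⟩
      · rw [Function.update_of_ne hp]
        exact hf p
    · intro p hp q hq hpq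
      by_cases h1 : p = p0
      · subst h1
        rw [Function.update_self, Function.update_of_ne hpq.symm]
        exact hg q (by simpa [hpq.symm] using hq)
      · rw [Function.update_of_ne h1]
        have hpX : p ∈ X := by simpa [h1] using hp
        by_cases h2 : q = p0
        · subst h2
          rw [Function.update_self]
          exact fun u v h => hg p hpX v u h.symm
        · rw [Function.update_of_ne h2]
          exact hd p hpX q (by simpa [h2] using hq) hpq

open Classical in
lemma single {β : Type} [Fintype β] [Nonempty β] (F : SimpleGraph β) (ℓ c : ℕ)
    (hℓ : Nat.card F.ConnectedComponent ≤ ℓ)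
    (hc : ∀ K : F.ConnectedComponent, K.supp.ncard ≤ c)
    (d : ℕ) (hd : 1 ≤ d)
    {α : Type} [Fintype α] (G : SimpleGraph α) (hdeg : DegeneracyLE G d)
    (S : Finset α) (hS : ¬ HasIndCopyAvoiding G F S) :
    ∃ K : F.ConnectedComponent, ∃ T : Finset α, T.card ≤ ℓ ^ 2 * c ^ 3 * d ∧
      ¬ HasIndCopyAvoiding G (F.induce K.supp) (S ∪ T) := by
  by_contra hcon
  push Not at hcon
  have : Fintype F.ConnectedComponent := Fintype.ofFinite _
  rw [Nat.card_eq_fintype_card] at hℓ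
  set k := Fintype.card F.ConnectedComponent with hk
  have x0 : β := Classical.arbitrary β
  have hkpos : 0 < k := Fintype.card_pos_iff.2 ⟨F.connectedComponentMk x0⟩
  have hc1 : 0 < c := lt_of_lt_of_le
    ((Set.ncard_pos (Set.toFinite _)).2 ⟨x0, by simp⟩) (hc (F.connectedComponentMk x0))
  have hc' : ∀ K : F.ConnectedComponent, Fintype.card K.supp ≤ c := by
    intro K
    have := hc K
    rwa [← Nat.card_coe_set_eq, Nat.card_eq_fintype_card] at this
  obtain ⟨f, hf, hdis⟩ := packing G (I := F.ConnectedComponent × Fin (d * k * c))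
    (fun p => p.1.supp) (fun p => F.induce p.1.supp) c (ℓ ^ 2 * c ^ 3 * d)
    (fun p => hc' p.1) S (fun p => hcon p.1) Finset.univ (by
      simp only [Finset.card_univ, Fintype.card_prod, Fintype.card_fin, ← hk]
      calc k * (d * k * c) * c = k ^ 2 * c ^ 2 * d := by ring
        _ ≤ ℓ ^ 2 * c ^ 3 * d := by gcongr <;> omega)
  obtain ⟨s, hs⟩ := choice_lemma G d hd hdeg (J := F.ConnectedComponent) (fun K => K.supp) c
    (d * k * c) hc' (by positivity) le_rfl f
    (fun p q h => hdis p (Finset.mem_univ _) q (Finset.mem_univ _) h)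
  apply hS
  let φ : β → α := fun x => f (F.connectedComponentMk x, s (F.connectedComponentMk x)) ⟨x, rfl⟩
  have hφ : ∀ x K (h : F.connectedComponentMk x = K), φ x = f (K, s K) ⟨x, h⟩ := by
    rintro x K rfl
    rfl
  refine ⟨⟨φ, ?_⟩, ?_, ?_⟩
  · intro x y hxy
    by_cases h : F.connectedComponentMk x = F.connectedComponentMk y
    · rw [hφ x _ h, hφ y _ rfl] at hxy
      exact congrArg Subtype.val ((f _).injective hxy)
    · exact absurd hxy (hdis _ (Finset.mem_univ _) _ (Finset.mem_univ _)
        (fun h' => h (congrArg Prod.fst h')) _ _)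
  · intro x
    exact (hf _).1 _
  · intro x y
    show F.Adj x y ↔ G.Adj (φ x) (φ y)
    by_cases h : F.connectedComponentMk x = F.connectedComponentMk y
    · rw [hφ x _ h, hφ y _ rfl, ← (hf _).2]
      rfl
    · refine ⟨fun ha => absurd ?_ h, fun ha => absurd ha (hs _ _ h _ _)⟩
      exact SimpleGraph.ConnectedComponent.eq.2 ha.reachable

/-- if `ℓ` bounds the number of connected components of every `F ∈ ℱ`,
`c` bounds the number of vertices of every connected component of every `F ∈ ℱ`,
`d ≥ 1`, and `G` has degeneracy at most `d`, then there is a choice `comp` of one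
connected component of each graph of `ℱ` (i.e. a member `ℱ' ∈ Conn(ℱ)`) such that
`opt*(G, ℱ') ≤ opt*(G, ℱ) + m·ℓ²·c³·d`. -/
theorem stmt1 {ι : Type} [Fintype ι] {β : ι → Type} [∀ i, Fintype (β i)]
    [∀ i, Nonempty (β i)]
    (F : ∀ i, SimpleGraph (β i)) (ℓ c : ℕ)
    (hℓ : ∀ i, Nat.card (F i).ConnectedComponent ≤ ℓ)
    (hc : ∀ i, ∀ K : (F i).ConnectedComponent, K.supp.ncard ≤ c)
    (d : ℕ) (hd : 1 ≤ d)
    {α : Type} [Fintype α] (G : SimpleGraph α) (hdeg : DegeneracyLE G d) :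
    ∃ comp : ∀ i, (F i).ConnectedComponent,
      optInd G (fun i => (F i).induce (comp i).supp) ≤
        optInd G F + Fintype.card ι * ℓ ^ 2 * c ^ 3 * d := by
  classical
  have hne : {n | ∃ S : Finset α, IsIndHitting G F S ∧ S.card = n}.Nonempty := by
    refine ⟨_, Finset.univ, ?_, rfl⟩
    rintro i ⟨f, hf, _⟩
    exact hf (Classical.arbitrary _) (Finset.mem_univ _)
  obtain ⟨S, hS, hcard⟩ := Nat.sInf_mem hne
  choose comp T hT hTh using fun i =>
    single (F i) ℓ c (hℓ i) (hc i) d hd G hdeg S (hS i)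
  refine ⟨comp, ?_⟩
  refine le_trans (Nat.sInf_le ⟨S ∪ Finset.univ.biUnion T, ?_, rfl⟩) ?_
  · rintro i ⟨f, hf, hf2⟩
    refine hTh i ⟨f, fun x hx => hf x ?_, hf2⟩
    rcases Finset.mem_union.1 hx with h | h
    · exact Finset.mem_union_left _ h
    · exact Finset.mem_union_right _ (Finset.mem_biUnion.2 ⟨i, Finset.mem_univ _, h⟩)
  · have h1 := Finset.card_biUnion_le_card_mul Finset.univ T _ (fun i _ => hT i)
    rw [Finset.card_univ] at h1
    have h2 := Finset.card_union_le S (Finset.univ.biUnion T)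
    have h3 : optInd G F = S.card := hcard.symm
    rw [h3]
    calc _ ≤ _ := h2
      _ ≤ S.card + Fintype.card ι * (ℓ ^ 2 * c ^ 3 * d) := by omega
      _ = _ := by ring
end

section
/- Let γ ≥ 1 and d ≥ 1 be integers, let C and D be graphs each with at most γ − 1 vertices, and let G be a finite simple graph in which every subgraph H satisfies 2·|E(H)| ≤ d·|V(H)| (every subgraph has average degree at most d). Set γ' = (2d+1)·γ. If G contains γ' pairwise vertex-disjoint induced subgraphs C₁,…,C_{γ'} isomorphic to C and γ' pairwise vertex-disjoint induced subgraphs D₁,…,D_{γ'} isomorphic to D, then there exist indices i and j such that C_i and D_j are vertex-disjoint and there is no edge of G between a vertex of C_i and a vertex of D_j; consequently G contains an induced subgraph isomorphic to the disjoint union of C and D. -/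
/-- `f` realizes an induced subgraph copy of `F` in `G`. -/
def IsIndCopy {α β : Type} (G : SimpleGraph α) (F : SimpleGraph β) (f : β ↪ α) : Prop :=
  ∀ u v, F.Adj u v ↔ G.Adj (f u) (f v)

/-- let `γ ≥ 1`, `d ≥ 1`, let `C`, `D` have at most `γ − 1` vertices
each, and let `G` be a graph every subgraph `H` of which satisfies
`2·|E(H)| ≤ d·|V(H)|`.  If `G` contains `γ' = (2d+1)·γ` pairwise vertex-disjoint
induced copies `C₁,…,C_{γ'}` of `C` and `γ'` pairwise vertex-disjoint induced
copies `D₁,…,D_{γ'}` of `D`, then there are indices `i`, `j` such that `C_i` and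
`D_j` are vertex-disjoint with no edge of `G` between them; consequently `G`
contains an induced subgraph isomorphic to the disjoint union `C ⊕g D`. -/
theorem stmt5 {βC βD α : Type} [Fintype βC] [Fintype βD] [Fintype α]
    (C : SimpleGraph βC) (D : SimpleGraph βD) (γ d : ℕ)
    (hγ : 1 ≤ γ) (hd : 1 ≤ d)
    (hCsize : Fintype.card βC ≤ γ - 1) (hDsize : Fintype.card βD ≤ γ - 1)
    (G : SimpleGraph α)
    (havg : ∀ H : G.Subgraph, 2 * H.edgeSet.ncard ≤ d * H.verts.ncard)
    (fC : Fin ((2 * d + 1) * γ) → (βC ↪ α)) (hfC : ∀ j, IsIndCopy G C (fC j))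
    (hdisjC : ∀ j j', j ≠ j' → ∀ x y, fC j x ≠ fC j' y)
    (fD : Fin ((2 * d + 1) * γ) → (βD ↪ α)) (hfD : ∀ j, IsIndCopy G D (fD j))
    (hdisjD : ∀ j j', j ≠ j' → ∀ x y, fD j x ≠ fD j' y) :
    (∃ i j, (∀ x y, fC i x ≠ fD j y) ∧ ∀ x y, ¬ G.Adj (fC i x) (fD j y)) ∧
      ∃ g : (βC ⊕ βD) ↪ α, IsIndCopy G (C ⊕g D) g := by
  classical
  have key : ∃ i j, (∀ x y, fC i x ≠ fD j y) ∧ ∀ x y, ¬ G.Adj (fC i x) (fD j y) := by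
    by_contra hcon
    have hx : ∀ p : Fin ((2 * d + 1) * γ) × Fin ((2 * d + 1) * γ), ∃ q : βC × βD,
        fC p.1 q.1 = fD p.2 q.2 ∨ G.Adj (fC p.1 q.1) (fD p.2 q.2) := by
      rintro ⟨i, j⟩
      by_contra hq
      push Not at hq
      exact hcon ⟨i, j, fun x y => (hq (x, y)).1, fun x y => (hq (x, y)).2⟩
    choose q hq using hx
    let A : Finset α := Finset.univ.image
      (fun p : Fin ((2 * d + 1) * γ) × βC => fC p.1 p.2)
    let B : Finset α := Finset.univ.image
      (fun p : Fin ((2 * d + 1) * γ) × βD => fD p.1 p.2)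
    have hA : A.card ≤ (2 * d + 1) * γ * (γ - 1) := by
      refine Finset.card_image_le.trans ?_
      simpa using Nat.mul_le_mul_left _ hCsize
    have hB : B.card ≤ (2 * d + 1) * γ * (γ - 1) := by
      refine Finset.card_image_le.trans ?_
      simpa using Nat.mul_le_mul_left _ hDsize
    let H : G.Subgraph := (⊤ : G.Subgraph).induce (↑(A ∪ B) : Set α)
    have hH := havg H
    have hHv : H.verts.ncard ≤ 2 * ((2 * d + 1) * γ * (γ - 1)) := by
      have : H.verts.ncard = (A ∪ B).card := by
        simp only [H, SimpleGraph.Subgraph.induce_verts, Set.ncard_coe_finset]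
      rw [this]
      have := Finset.card_union_le A B
      omega
    have hdart := H.spanningCoe.dart_card_eq_twice_card_edges
    have hE : H.spanningCoe.edgeFinset.card = H.edgeSet.ncard := by
      rw [← Set.ncard_coe_finset, SimpleGraph.coe_edgeFinset]
      simp
    let P : Finset (α × α) := A.image (fun a => (a, a)) ∪
      (Finset.univ : Finset H.spanningCoe.Dart).image (fun e => e.toProd)
    have hP : P.card ≤ A.card + Fintype.card H.spanningCoe.Dart :=
      (Finset.card_union_le _ _).trans (add_le_add Finset.card_image_le Finset.card_image_le)
    have hinj : (Finset.univ : Finset (Fin ((2 * d + 1) * γ) × Fin ((2 * d + 1) * γ))).card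
        ≤ P.card := by
      refine Finset.card_le_card_of_injOn
        (fun p => (fC p.1 (q p).1, fD p.2 (q p).2)) ?_ ?_
      · intro p _
        have ha : fC p.1 (q p).1 ∈ A := Finset.mem_image.2 ⟨(p.1, (q p).1), by simp, rfl⟩
        have hb : fD p.2 (q p).2 ∈ B := Finset.mem_image.2 ⟨(p.2, (q p).2), by simp, rfl⟩
        rcases hq p with h | h
        · exact Finset.mem_union_left _ (Finset.mem_image.2 ⟨_, ha, by simp [← h]⟩)
        · refine Finset.mem_union_right _ (Finset.mem_image.2
            ⟨⟨(fC p.1 (q p).1, fD p.2 (q p).2), ?_⟩, by simp, rfl⟩)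
          exact ⟨Finset.mem_coe.2 (Finset.mem_union_left _ ha),
            Finset.mem_coe.2 (Finset.mem_union_right _ hb), h⟩
      · intro p _ p' _ h
        have h' := Prod.mk.inj h
        refine Prod.ext ?_ ?_
        · by_contra hne
          exact hdisjC _ _ hne _ _ h'.1
        · by_contra hne
          exact hdisjD _ _ hne _ _ h'.2
    simp only [Finset.card_univ, Fintype.card_prod, Fintype.card_fin] at hinj
    obtain ⟨g, rfl⟩ : ∃ g, γ = g + 1 := ⟨γ - 1, by omega⟩
    simp only [Nat.add_sub_cancel] at *
    have h1 := Nat.mul_le_mul_left d hHv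
    have hN : 0 < (2 * d + 1) * (g + 1) := by positivity
    generalize hNdef : (2 * d + 1) * (g + 1) = N at hinj hA h1 hN
    have h2 : N * N ≤ N * g + d * (2 * (N * g)) := by omega
    have h3 : N * N = N * g + d * (2 * (N * g)) + N * (2 * d + 1) := by
      nth_rewrite 2 [← hNdef]; ring
    have h4 : 0 < N * (2 * d + 1) := by positivity
    omega
  refine ⟨key, ?_⟩
  obtain ⟨i, j, h1, h2⟩ := key
  refine ⟨⟨Sum.elim (fC i) (fD j), ?_⟩, ?_⟩
  · exact (fC i).injective.sumElim (fD j).injective h1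
  · rintro (u | u) (v | v)
    · simpa using hfC i u v
    · simpa using h2 u v
    · simpa using fun h => h2 v u h.symm
    · simpa using hfD j u v
end

section
/- Let G be a finite simple graph, σ a linear order on V(G), and γ ≥ 1 an integer. Let 𝒱 be a collection of subsets of V(G) such that every V ∈ 𝒱 satisfies |V| ≤ γ and the induced subgraph G[V] is connected. Let w be a real number with w ≥ wcol_γ(G,σ), let t > 0, and let r be an integer with r ≥ (1 + 1/t)·w. Then for every subcollection 𝒰 ⊆ 𝒱 and every hitting set S of 𝒰, there exists a set S' with S ⊆ S' ⊆ V(G), |S'| ≤ (1+t)·|S|, such that S' intersects every set X that is the core of an r-sunflower in 𝒰. -/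
/-- `WR_r(G, σ, v)`: the set of vertices `u` reachable from `v` by a walk of
length at most `r` on which every vertex is `≤ u` in the order `σ`. -/
def WR {α : Type} (G : SimpleGraph α) (σ : LinearOrder α) (r : ℕ) (v : α) : Set α :=
  {u | ∃ p : G.Walk v u, p.length ≤ r ∧ ∀ w ∈ p.support, σ.le w u}

/-- `wcol_r(G, σ)`: the weak `r`-coloring number of `G` under the order `σ`. -/
noncomputable def wcol {α : Type} [Fintype α] (G : SimpleGraph α)
    (σ : LinearOrder α) (r : ℕ) : ℕ :=
  Finset.univ.sup fun v => (WR G σ r v).ncard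

/-- `X` is the core of an `r`-sunflower in `𝒰`: there are `r` distinct members of
`𝒰` whose pairwise intersections all equal `X`. -/
def IsSunflowerWithCore {α : Type} [DecidableEq α] (𝒰 : Set (Finset α)) (r : ℕ)
    (X : Finset α) : Prop :=
  ∃ 𝒮 : Finset (Finset α), ↑𝒮 ⊆ 𝒰 ∧ 𝒮.card = r ∧
    ∀ A ∈ 𝒮, ∀ B ∈ 𝒮, A ≠ B → A ∩ B = X

theorem aux_max {α : Type} (σ : LinearOrder α) (V : Finset α) (h : V.Nonempty) :
    ∃ m ∈ V, ∀ v ∈ V, σ.le v m := by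
  let _ := σ
  exact ⟨V.max' h, V.max'_mem h, fun v hv => V.le_max' v hv⟩

theorem aux_walk {α : Type} (G : SimpleGraph α) (σ : LinearOrder α) (γ : ℕ)
    (V : Finset α) (hc : V.card ≤ γ) (hV : (G.induce (↑V : Set α)).Connected)
    (m v : α) (hm : m ∈ V) (hv : v ∈ V) (hmax : ∀ u ∈ V, σ.le u m) :
    m ∈ WR G σ γ v := by
  classical
  obtain ⟨p, hp⟩ := (hV.preconnected ⟨v, hv⟩ ⟨m, hm⟩).exists_isPath
  refine ⟨p.map (SimpleGraph.Embedding.induce (↑V : Set α)).toHom, ?_, ?_⟩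
  · refine le_trans (SimpleGraph.Walk.length_map _ p).le ?_
    have h1 := hp.length_lt
    have h2 : Fintype.card (↑V : Set α) = V.card := by simp
    omega
  · intro u hu
    have hu2 := (SimpleGraph.Walk.support_map (SimpleGraph.Embedding.induce (↑V : Set α)).toHom p) ▸ hu
    obtain ⟨a, -, rfl⟩ := List.mem_map.1 hu2
    exact hmax _ a.2

theorem aux_wcol {α : Type} [Fintype α] (G : SimpleGraph α)
    (σ : LinearOrder α) (r : ℕ) (v : α) : (WR G σ r v).ncard ≤ wcol G σ r :=
  Finset.le_sup (f := fun v => (WR G σ r v).ncard) (Finset.mem_univ v)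

/-- let `𝒱` be a collection of subsets of `V(G)`, each of size at most
`γ` and inducing a connected subgraph of `G`.  Let `w ≥ wcol_γ(G,σ)`, `t > 0`,
and let `r ≥ (1 + 1/t)·w`.  Then for every `𝒰 ⊆ 𝒱` and every hitting set `S` of
`𝒰` there is `S' ⊇ S` with `|S'| ≤ (1+t)·|S|` hitting every nonempty core of an
`r`-sunflower in `𝒰`. -/
theorem stmt6 {α : Type} [Fintype α] [DecidableEq α]
    (G : SimpleGraph α) (σ : LinearOrder α) (γ : ℕ) (hγ : 1 ≤ γ)
    (𝒱 : Set (Finset α))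
    (hsize : ∀ V ∈ 𝒱, V.card ≤ γ)
    (hconn : ∀ V ∈ 𝒱, (G.induce (↑V : Set α)).Connected)
    (w t : ℝ) (hw : (wcol G σ γ : ℝ) ≤ w) (ht : 0 < t)
    (r : ℕ) (hr : (1 + 1 / t) * w ≤ (r : ℝ))
    (𝒰 : Set (Finset α)) (h𝒰 : 𝒰 ⊆ 𝒱)
    (S : Finset α) (hS : ∀ V ∈ 𝒰, (S ∩ V).Nonempty) :
    ∃ S' : Finset α, S ⊆ S' ∧ ((S'.card : ℝ) ≤ (1 + t) * (S.card : ℝ)) ∧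
      ∀ X : Finset α, X.Nonempty → IsSunflowerWithCore 𝒰 r X →
        (S' ∩ X).Nonempty := by
  classical
  rcases isEmpty_or_nonempty α with hα | ⟨⟨a0⟩⟩
  · refine ⟨S, subset_rfl, ?_, ?_⟩
    · have : (0:ℝ) ≤ S.card := by positivity
      nlinarith
    · rintro X ⟨x, -⟩
      exact (hα.false x).elim
  have hw1 : 1 ≤ wcol G σ γ := by
    refine le_trans ?_ (aux_wcol G σ γ a0)
    rw [Nat.one_le_iff_ne_zero, ← Nat.pos_iff_ne_zero, Set.ncard_pos]
    exact ⟨a0, SimpleGraph.Walk.nil, by simp, by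
      intro u hu
      simp at hu
      subst hu
      exact σ.le_refl _⟩
  have hw1' : (1:ℝ) ≤ w := le_trans (by exact_mod_cast hw1) hw
  have hwt : 0 < w / t := by positivity
  have hr' : w + w / t ≤ r := by
    have : (1 + 1 / t) * w = w + w / t := by ring
    linarith
  have hr2 : 2 ≤ r := by
    have : (1:ℝ) < r := by linarith
    exact_mod_cast this
  let N : α → Finset α := fun v => S.filter fun s => v ∈ WR G σ γ s
  let T : Finset α := Finset.univ.filter fun v => w / t ≤ ((N v).card : ℝ)
  have hT : (T.card : ℝ) ≤ t * S.card := by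
    have h1 : (T.card : ℝ) * (w / t) ≤ ∑ v ∈ T, ((N v).card : ℝ) := by
      rw [← nsmul_eq_mul]
      apply Finset.card_nsmul_le_sum
      intro v hv
      exact (Finset.mem_filter.1 hv).2
    have h2 : ∑ v ∈ T, ((N v).card : ℝ) ≤ ∑ v, ((N v).card : ℝ) :=
      Finset.sum_le_sum_of_subset_of_nonneg (Finset.subset_univ _) (by intros; positivity)
    have h3 : ∑ v, (N v).card ≤ S.card * wcol G σ γ := by
      have e : ∑ v, (N v).card
          = ∑ s ∈ S, (Finset.univ.filter fun v => v ∈ WR G σ γ s).card := by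
        simp only [N, Finset.card_filter]
        exact Finset.sum_comm
      rw [e, ← smul_eq_mul]
      apply Finset.sum_le_card_nsmul
      intro s _
      refine le_trans (le_of_eq ?_) (aux_wcol G σ γ s)
      rw [← Set.ncard_coe_finset]
      congr 1
      ext v
      simp
    have h3' : ∑ v, ((N v).card : ℝ) ≤ S.card * (wcol G σ γ : ℝ) := by exact_mod_cast h3
    have h4 : (S.card : ℝ) * (wcol G σ γ : ℝ) ≤ S.card * w := by gcongr
    have h5 : (T.card : ℝ) * (w / t) ≤ (t * S.card) * (w / t) := by
      have : (t * S.card) * (w / t) = S.card * w := by field_simp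
      linarith
    exact le_of_mul_le_mul_right h5 hwt
  refine ⟨S ∪ T, Finset.subset_union_left, ?_, ?_⟩
  · have : ((S ∪ T).card : ℝ) ≤ S.card + T.card := by exact_mod_cast Finset.card_union_le S T
    linarith
  rintro X hX ⟨F, hF, hcard, hsun⟩
  by_cases hSX : (S ∩ X).Nonempty
  · exact hSX.mono (Finset.inter_subset_inter_right Finset.subset_union_left)
  have hXA : ∀ A ∈ F, X ⊆ A := by
    intro A hA
    obtain ⟨B, hB, hne⟩ := Finset.exists_mem_ne (by omega : 1 < F.card) A
    rw [← hsun A hA B hB hne.symm]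
    exact Finset.inter_subset_left
  have hs : ∀ A : Finset α, ∃ s, A ∈ F → s ∈ S ∧ s ∈ A := by
    intro A
    by_cases hA : A ∈ F
    · obtain ⟨s, hs⟩ := hS A (hF hA)
      exact ⟨s, fun _ => Finset.mem_inter.1 hs⟩
    · exact ⟨a0, fun h => absurd h hA⟩
  choose s hs using hs
  have hm : ∀ A : Finset α, ∃ m, A ∈ F → m ∈ A ∧ ∀ v ∈ A, σ.le v m := by
    intro A
    by_cases hA : A ∈ F
    · obtain ⟨m, hm⟩ := aux_max σ A (hX.mono (hXA A hA))
      exact ⟨m, fun _ => hm⟩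
    · exact ⟨a0, fun h => absurd h hA⟩
  choose m hm using hm
  obtain ⟨x, hxX, hxmax⟩ := aux_max σ X hX
  have hWR : ∀ A ∈ F, ∀ v ∈ A, m A ∈ WR G σ γ v := fun A hA v hv =>
    aux_walk G σ γ A (hsize A (h𝒰 (hF hA))) (hconn A (h𝒰 (hF hA))) _ _ (hm A hA).1 hv (hm A hA).2
  have c2 : (F.filter fun A => m A ∉ X).card ≤ wcol G σ γ := by
    refine le_trans ?_ (aux_wcol G σ γ x)
    rw [← Set.ncard_coe_finset]
    refine Set.ncard_le_ncard_of_injOn m ?_ ?_ (Set.toFinite _)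
    · intro A hA
      have hA := Finset.mem_filter.1 hA
      exact hWR A hA.1 x (hXA A hA.1 hxX)
    · intro A hA B hB hAB
      have hA := Finset.mem_filter.1 hA
      have hB := Finset.mem_filter.1 hB
      by_contra hne
      apply hA.2
      rw [← hsun A hA.1 B hB.1 hne]
      exact Finset.mem_inter.2 ⟨(hm A hA.1).1, hAB ▸ (hm B hB.1).1⟩
  have c1 : (F.filter fun A => m A ∈ X).card ≤ (N x).card := by
    refine Finset.card_le_card_of_injOn s ?_ ?_
    · intro A hA
      have hA := Finset.mem_filter.1 hA
      have hmx : m A = x :=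
        σ.le_antisymm _ _ (hxmax _ hA.2) ((hm A hA.1).2 x (hXA A hA.1 hxX))
      refine Finset.mem_coe.2 (Finset.mem_filter.2 ⟨(hs A hA.1).1, ?_⟩)
      rw [← hmx]
      exact hWR A hA.1 _ (hs A hA.1).2
    · intro A hA B hB hAB
      have hA := Finset.mem_filter.1 hA
      have hB := Finset.mem_filter.1 hB
      by_contra hne
      apply hSX
      refine ⟨s A, Finset.mem_inter.2 ⟨(hs A hA.1).1, ?_⟩⟩
      rw [← hsun A hA.1 B hB.1 hne]
      exact Finset.mem_inter.2 ⟨(hs A hA.1).2, hAB ▸ (hs B hB.1).2⟩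
  have c3 := Finset.card_filter_add_card_filter_not (s := F) (fun A => m A ∈ X)
  have c4 : (r : ℝ) ≤ (N x).card + wcol G σ γ := by
    have : r ≤ (N x).card + wcol G σ γ := by omega
    exact_mod_cast this
  refine ⟨x, Finset.mem_inter.2 ⟨Finset.mem_union_right _ ?_, hxX⟩⟩
  exact Finset.mem_filter.2 ⟨Finset.mem_univ _, by linarith⟩
end

section
/- Let γ ≥ 2 and δ ≥ 1 be integers and let 𝒱 be a collection of subsets of a finite set U, each of size at most γ. Let Γ be the collection of all nonempty sets X ⊆ U that are the core of a (δ·γ^{|X|})-sunflower in 𝒱, and let Γ* be the collection of inclusion-minimal members of Γ. Then every element u ∈ U is contained in at most (δ·γ^γ)^γ·γ! members of Γ*. -/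
/-- `Γ`: the collection of all nonempty sets `X` that are the core of a
`(δ·γ^{|X|})`-sunflower in `𝒱`. -/
def GammaColl {α : Type} [DecidableEq α] (𝒱 : Set (Finset α)) (γ δ : ℕ) :
    Set (Finset α) :=
  {X | X.Nonempty ∧ IsSunflowerWithCore 𝒱 (δ * γ ^ X.card) X}

/-- `Γ*`: the inclusion-minimal members of `Γ`. -/
def GammaMin {α : Type} [DecidableEq α] (𝒱 : Set (Finset α)) (γ δ : ℕ) :
    Set (Finset α) :=
  {X ∈ GammaColl 𝒱 γ δ | ∀ Y ∈ GammaColl 𝒱 γ δ, Y ⊆ X → Y = X}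

theorem aux_hit {α : Type} [DecidableEq α] (S : Finset (Finset α)) (X T : Finset α)
    (hS : ∀ A ∈ S, ∀ B ∈ S, A ≠ B → A ∩ B = X) (hT : T.card < S.card) :
    ∃ A ∈ S, ∀ x ∈ A, x ∈ T → x ∈ X := by
  by_contra hcon
  push Not at hcon
  have hcon' : ∀ A : Finset α, ∃ x, A ∈ S → x ∈ A ∧ x ∈ T ∧ x ∉ X := by
    intro A
    by_cases hA : A ∈ S
    · obtain ⟨x, hx⟩ := hcon A hA
      exact ⟨x, fun _ => hx⟩
    · have : S.Nonempty := Finset.card_pos.1 (by omega)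
      obtain ⟨B, hB⟩ := this
      obtain ⟨x, hx⟩ := hcon B hB
      exact ⟨x, fun h => absurd h hA⟩
  choose f hf using hcon'
  have h1 := fun A hA => (hf A hA).1
  have h2 := fun A hA => (hf A hA).2.1
  have h3 := fun A hA => (hf A hA).2.2
  have : S.card ≤ T.card := by
    apply Finset.card_le_card_of_injOn f
    · intro A hA
      exact h2 A hA
    · intro A hA B hB hAB
      by_contra hne
      apply h3 A hA
      rw [← hS A hA B hB hne, Finset.mem_inter]
      exact ⟨h1 A hA, hAB ▸ h1 B hB⟩
  omega

theorem aux_er {α : Type} [DecidableEq α] (r : ℕ) (hr : 1 ≤ r) (k : ℕ) :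
    ∀ F : Finset (Finset α), (∀ A ∈ F, A.card ≤ k) → r ^ k * k.factorial < F.card →
    ∃ S ⊆ F, S.card = r ∧ ∃ X, ∀ A ∈ S, ∀ B ∈ S, A ≠ B → A ∩ B = X := by
  induction k with
  | zero =>
    intro F hF hc
    have : F ⊆ {∅} := by
      intro A hA
      have := hF A hA
      simpa using this
    have := Finset.card_le_card this
    simp at this hc
    omega
  | succ k ih =>
    intro F hF hc
    obtain ⟨S, hS, hmax⟩ := Finset.exists_max_image
      (F.powerset.filter (fun S => ∀ A ∈ S, ∀ B ∈ S, A ≠ B → A ∩ B = ∅)) Finset.card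
      ⟨∅, by simp⟩
    simp only [Finset.mem_filter, Finset.mem_powerset] at hS hmax
    obtain ⟨hSF, hSd⟩ := hS
    by_cases hSr : r ≤ S.card
    · obtain ⟨S', hS', hc'⟩ := Finset.exists_subset_card_eq hSr
      exact ⟨S', hS'.trans hSF, hc', ∅, fun A hA B hB => hSd A (hS' hA) B (hS' hB)⟩
    push Not at hSr
    set W := S.biUnion id with hW
    have hWc : W.card ≤ S.card * (k+1) :=
      Finset.card_biUnion_le_card_mul _ _ _ (fun A hA => hF A (hSF hA))
    have hcov : F ⊆ insert ∅ (W.biUnion (fun x => F.filter (fun A => x ∈ A))) := by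
      intro A hA
      by_cases hAe : A = ∅
      · simp [hAe]
      apply Finset.mem_insert_of_mem
      have : ∃ x ∈ W, x ∈ A := by
        by_contra hno
        push Not at hno
        have hno' : ∀ B ∈ S, A ∩ B = ∅ := by
          intro B hB
          ext x
          simp only [Finset.mem_inter, Finset.notMem_empty, iff_false, not_and]
          intro hxA hxB
          exact hno x (Finset.mem_biUnion.2 ⟨B, hB, hxB⟩) hxA
        have hAS : A ∉ S := by
          intro h
          have := hno' A h
          simp at this
          exact hAe this
        have := hmax (insert A S) ⟨Finset.insert_subset hA hSF, by
          intro B hB C hC hne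
          rw [Finset.mem_insert] at hB hC
          rcases hB with rfl | hB <;> rcases hC with rfl | hC
          · exact absurd rfl hne
          · exact hno' C hC
          · rw [Finset.inter_comm]; exact hno' B hB
          · exact hSd B hB C hC hne⟩
        rw [Finset.card_insert_of_notMem hAS] at this
        omega
      obtain ⟨x, hx, hxA⟩ := this
      exact Finset.mem_biUnion.2 ⟨x, hx, Finset.mem_filter.2 ⟨hA, hxA⟩⟩
    have : ∃ x ∈ W, r ^ k * k.factorial < (F.filter (fun A => x ∈ A)).card := by
      by_contra hno
      push Not at hno
      have h1 := Finset.card_le_card hcov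
      have h2 := Finset.card_insert_le (∅ : Finset α) (W.biUnion (fun x => F.filter (fun A => x ∈ A)))
      have h3 := Finset.card_biUnion_le_card_mul W (fun x => F.filter (fun A => x ∈ A)) _ hno
      have h4 : 1 ≤ r ^ k * k.factorial := Nat.mul_pos (Nat.pow_pos hr) k.factorial_pos
      have h5 : r ^ (k+1) * (k+1).factorial = r * (k+1) * (r ^ k * k.factorial) := by
        rw [Nat.factorial_succ]; ring
      rw [h5] at hc
      generalize r ^ k * k.factorial = M at *
      have h6 : W.card + 1 ≤ r * (k+1) := by nlinarith
      nlinarith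
    obtain ⟨x, -, hx⟩ := this
    have hinj : Set.InjOn (fun A : Finset α => A.erase x) (F.filter (fun A => x ∈ A)) := by
      intro A hA B hB hAB
      simp only [Finset.coe_filter, Set.mem_ofPred_eq] at hA hB
      have : insert x (A.erase x) = insert x (B.erase x) := by simp only at hAB; rw [hAB]
      rwa [Finset.insert_erase hA.2, Finset.insert_erase hB.2] at this
    obtain ⟨S', hS', hc', X, hX⟩ := ih ((F.filter (fun A => x ∈ A)).image (fun A => A.erase x))
      (by
        intro A hA
        obtain ⟨B, hB, rfl⟩ := Finset.mem_image.1 hA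
        rw [Finset.mem_filter] at hB
        have := hF B hB.1
        have := Finset.card_erase_of_mem hB.2
        omega)
      (by rwa [Finset.card_image_of_injOn hinj])
    have hS'' : ∀ A ∈ S', x ∉ A ∧ insert x A ∈ F := by
      intro A hA
      obtain ⟨B, hB, rfl⟩ := Finset.mem_image.1 (hS' hA)
      rw [Finset.mem_filter] at hB
      exact ⟨by simp, by simpa [Finset.insert_erase hB.2] using hB.1⟩
    refine ⟨S'.image (insert x), ?_, ?_, insert x X, ?_⟩
    · intro A hA
      obtain ⟨B, hB, rfl⟩ := Finset.mem_image.1 hA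
      exact (hS'' B hB).2
    · rw [Finset.card_image_of_injOn, hc']
      intro A hA B hB hAB
      have : (insert x A).erase x = (insert x B).erase x := by rw [hAB]
      rwa [Finset.erase_insert (hS'' A hA).1, Finset.erase_insert (hS'' B hB).1] at this
    · intro A hA B hB hne
      obtain ⟨A, hA', rfl⟩ := Finset.mem_image.1 hA
      obtain ⟨B, hB', rfl⟩ := Finset.mem_image.1 hB
      rw [← Finset.insert_inter_distrib, hX A hA' B hB' (fun h => hne (by rw [h]))]

theorem aux_core_sub {α : Type} [DecidableEq α] (S : Finset (Finset α)) (X : Finset α)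
    (hS : ∀ A ∈ S, ∀ B ∈ S, A ≠ B → A ∩ B = X) (hc : 1 < S.card) (A : Finset α) (hA : A ∈ S) :
    ∃ B ∈ S, A ≠ B ∧ A ∩ B = X := by
  obtain ⟨B, hB, hne⟩ := Finset.exists_mem_ne hc A
  exact ⟨B, hB, hne.symm, hS A hA B hB hne.symm⟩

theorem stmt10 {α : Type} [Fintype α] [DecidableEq α]
    (γ δ : ℕ) (hγ : 2 ≤ γ) (hδ : 1 ≤ δ)
    (𝒱 : Set (Finset α)) (hsize : ∀ V ∈ 𝒱, V.card ≤ γ) (u : α) :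
    ({X ∈ GammaMin 𝒱 γ δ | u ∈ X}).ncard ≤ (δ * γ ^ γ) ^ γ * Nat.factorial γ := by
  classical
  by_contra hcon
  push Not at hcon
  rw [Set.ncard_eq_toFinset_card'] at hcon
  have hpow : ∀ n, n ≠ 0 → 1 < δ * γ ^ n := by
    intro n hn
    have : 1 < γ ^ n := Nat.one_lt_pow hn (by omega)
    nlinarith
  -- properties of members of Γ
  have hG : ∀ Y ∈ GammaColl 𝒱 γ δ, ∃ S : Finset (Finset α), ↑S ⊆ 𝒱 ∧ S.card = δ * γ ^ Y.card ∧
      (∀ A ∈ S, ∀ B ∈ S, A ≠ B → A ∩ B = Y) ∧ (∀ A ∈ S, Y ⊆ A) := by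
    rintro Y ⟨hne, S, h1, h2, h3⟩
    refine ⟨S, h1, h2, h3, ?_⟩
    intro A hA
    obtain ⟨B, -, -, hB⟩ := aux_core_sub S Y h3
      (by rw [h2]; exact hpow _ (Finset.card_pos.2 hne).ne') A hA
    rw [← hB]; exact Finset.inter_subset_left
  have hGc : ∀ Y ∈ GammaColl 𝒱 γ δ, Y.card ≤ γ := by
    intro Y hY
    obtain ⟨S, h1, h2, -, h4⟩ := hG Y hY
    have : 0 < S.card := by
      rw [h2]; have := hpow _ (Finset.card_pos.2 hY.1).ne'; omega
    obtain ⟨A, hA⟩ := Finset.card_pos.1 this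
    exact (Finset.card_le_card (h4 A hA)).trans (hsize A (h1 hA))
  have hr := hpow γ (by omega)
  obtain ⟨S, hSF, hSc, X, hX⟩ := aux_er (δ * γ ^ γ) (by omega) γ _ (by
    intro A hA
    rw [Set.mem_toFinset] at hA
    exact hGc A hA.1.1) hcon
  have hSm : ∀ A ∈ S, A ∈ GammaMin 𝒱 γ δ ∧ u ∈ A := by
    intro A hA
    simpa using hSF hA
  have hsub : ∀ A ∈ S, X ⊂ A := by
    intro A hA
    obtain ⟨B, hB, hne, hAB⟩ := aux_core_sub S X hX (by omega) A hA
    refine Finset.ssubset_iff_subset_ne.2 ⟨by rw [← hAB]; exact Finset.inter_subset_left, ?_⟩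
    intro h
    apply hne
    apply (hSm B hB).1.2 A (hSm A hA).1.1
    rw [← h, ← hAB]; exact Finset.inter_subset_right
  obtain ⟨A0, hA0⟩ : S.Nonempty := Finset.card_pos.1 (by omega)
  have huX : u ∈ X := by
    obtain ⟨B, hB, hne, hAB⟩ := aux_core_sub S X hX (by omega) A0 hA0
    rw [← hAB]; exact Finset.mem_inter.2 ⟨(hSm _ hA0).2, (hSm _ hB).2⟩
  have hXc : X.card < γ :=
    (Finset.card_lt_card (hsub A0 hA0)).trans_le (hGc A0 (hSm A0 hA0).1.1)
  have hmono : ∀ n, X.card < n → ∀ m, m < δ * γ ^ X.card → m * γ < δ * γ ^ n := by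
    intro n hn m hm
    calc m * γ < δ * γ ^ X.card * γ := Nat.mul_lt_mul_of_pos_right hm (by omega)
      _ = δ * γ ^ (X.card + 1) := by ring
      _ ≤ δ * γ ^ n := Nat.mul_le_mul_left _ (Nat.pow_le_pow_right (by omega) hn)
  have greedy : ∀ m, m ≤ δ * γ ^ X.card → ∃ T : Finset (Finset α), ↑T ⊆ 𝒱 ∧ T.card = m ∧
      (∀ A ∈ T, ∀ B ∈ T, A ≠ B → A ∩ B = X) ∧ ∀ A ∈ T, X ⊂ A := by
    intro m
    induction m with
    | zero => intro _; exact ⟨∅, by simp⟩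
    | succ m ih =>
      intro hm
      obtain ⟨T, hT1, hT2, hT3, hT4⟩ := ih (by omega)
      set W := T.biUnion id \ X with hW
      have hWc : W.card ≤ m * γ := by
        refine (Finset.card_le_card Finset.sdiff_subset).trans ?_
        rw [← hT2]
        exact Finset.card_biUnion_le_card_mul _ _ _ (fun A hA => hsize A (hT1 hA))
      obtain ⟨Y, hY, hYW⟩ := aux_hit S X W hX
        (by rw [hSc]; exact hWc.trans_lt (hmono _ hXc m (by omega)))
      obtain ⟨R, hR1, hR2, hR3, hR4⟩ := hG Y (hSm Y hY).1.1
      obtain ⟨V, hV, hVW⟩ := aux_hit R Y W hR3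
        (by rw [hR2]; exact hWc.trans_lt (hmono _ (Finset.card_lt_card (hsub Y hY)) m (by omega)))
      have hXV : X ⊂ V := (hsub Y hY).trans_subset (hR4 V hV)
      have hVT : ∀ B ∈ T, V ∩ B = X := by
        intro B hB
        apply Finset.Subset.antisymm
        · intro x hx
          rw [Finset.mem_inter] at hx
          by_contra hxX
          have hxW : x ∈ W := Finset.mem_sdiff.2 ⟨Finset.mem_biUnion.2 ⟨B, hB, hx.2⟩, hxX⟩
          exact hxX (hYW x (hVW x hx.1 hxW) hxW)
        · exact Finset.subset_inter hXV.subset (hT4 B hB).subset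
      have hVn : V ∉ T := by
        intro h
        have := hVT V h
        rw [Finset.inter_self] at this
        exact hXV.ne this.symm
      refine ⟨insert V T, ?_, ?_, ?_, ?_⟩
      · rw [Finset.coe_insert]
        exact Set.insert_subset (hR1 hV) hT1
      · rw [Finset.card_insert_of_notMem hVn, hT2]
      · intro B hB C hC hne
        rw [Finset.mem_insert] at hB hC
        rcases hB with rfl | hB <;> rcases hC with rfl | hC
        · exact absurd rfl hne
        · exact hVT C hC
        · rw [Finset.inter_comm]; exact hVT B hB
        · exact hT3 B hB C hC hne
      · intro B hB
        rcases Finset.mem_insert.1 hB with rfl | hB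
        · exact hXV
        · exact hT4 B hB
  obtain ⟨T, hT1, hT2, hT3, -⟩ := greedy _ le_rfl
  exact (hsub A0 hA0).ne ((hSm A0 hA0).1.2 X ⟨⟨u, huX⟩, T, hT1, hT2, hT3⟩ (hsub A0 hA0).subset)
end

section
/- Let γ ≥ 2 and δ ≥ 1 be integers and let 𝒱 be a collection of subsets of a finite set U, each of size at most γ. Let Γ be the collection of all nonempty sets X ⊆ U that are the core of a (δ·γ^{|X|})-sunflower in 𝒱. If some k distinct members of Γ form a k-sunflower with nonempty core X, where k ≥ δ·γ^γ, then X ∈ Γ. -/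
theorem sf_avoid {α : Type} [DecidableEq α] (𝒮 : Finset (Finset α)) (C W : Finset α)
    (h : ∀ A ∈ 𝒮, ∀ B ∈ 𝒮, A ≠ B → A ∩ B = C) (hc : W.card < 𝒮.card) :
    ∃ A ∈ 𝒮, A ∩ W ⊆ C := by
  by_contra hcon
  push Not at hcon
  have h1 : ∀ A ∈ 𝒮, ∃ x, x ∈ A ∧ x ∈ W ∧ x ∉ C := by
    intro A hA
    obtain ⟨x, hx, hxC⟩ := Finset.not_subset.mp (hcon A hA)
    rw [Finset.mem_inter] at hx
    exact ⟨x, hx.1, hx.2, hxC⟩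
  have : Nonempty α := by
    obtain ⟨A, hA⟩ := Finset.card_pos.mp (by omega : 0 < 𝒮.card)
    exact ⟨(h1 A hA).choose⟩
  choose! f hf using h1
  obtain ⟨A, hA, B, hB, hne, he⟩ :=
    Finset.exists_ne_map_eq_of_card_lt_of_maps_to hc (fun A hA => (hf A hA).2.1)
  apply (hf A hA).2.2
  rw [← h A hA B hB hne, Finset.mem_inter]
  exact ⟨(hf A hA).1, he ▸ (hf B hB).1⟩

theorem sf_core_subset {α : Type} [DecidableEq α] (𝒮 : Finset (Finset α)) (C : Finset α)
    (h : ∀ A ∈ 𝒮, ∀ B ∈ 𝒮, A ≠ B → A ∩ B = C) (hc : 1 < 𝒮.card) :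
    ∀ A ∈ 𝒮, C ⊆ A := by
  intro A hA
  obtain ⟨B, hB, hne⟩ := Finset.exists_mem_ne hc A
  rw [← h A hA B hB hne.symm]
  exact Finset.inter_subset_left

/-- let `γ ≥ 2`, `δ ≥ 1`, and let `𝒱` consist of sets of size at
most `γ`.  If `k` distinct members of `Γ` form a `k`-sunflower with nonempty core
`X`, where `k ≥ δ·γ^γ`, then `X ∈ Γ`. -/
theorem stmt11 {α : Type} [Fintype α] [DecidableEq α]
    (γ δ : ℕ) (hγ : 2 ≤ γ) (hδ : 1 ≤ δ)
    (𝒱 : Set (Finset α)) (hsize : ∀ V ∈ 𝒱, V.card ≤ γ)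
    (k : ℕ) (hk : δ * γ ^ γ ≤ k)
    (X : Finset α) (hX : X.Nonempty)
    (hsun : IsSunflowerWithCore (GammaColl 𝒱 γ δ) k X) :
    X ∈ GammaColl 𝒱 γ δ := by
  obtain ⟨𝒜, h𝒜, hcard, hint⟩ := hsun
  by_cases hXin : X ∈ 𝒜
  · exact h𝒜 hXin
  have hpow : ∀ n, 1 ≤ n → 1 < δ * γ ^ n := by
    intro n hn
    have h1 : γ ^ 1 ≤ γ ^ n := Nat.pow_le_pow_right (by omega) hn
    have h2 : 1 * γ ^ n ≤ δ * γ ^ n := Nat.mul_le_mul_right _ hδ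
    rw [pow_one] at h1
    omega
  have hk1 : 1 < 𝒜.card := by
    have := hpow γ (by omega)
    omega
  have hsub := sf_core_subset 𝒜 X hint hk1
  have hss : ∀ A ∈ 𝒜, X.card < A.card := fun A hA =>
    Finset.card_lt_card ((hsub A hA).ssubset_of_ne (fun h => hXin (h ▸ hA)))
  have hXγ : X.card + 1 ≤ γ := by
    obtain ⟨A, hA⟩ := Finset.card_pos.mp (by omega : 0 < 𝒜.card)
    obtain ⟨hAne, 𝒯, h𝒯, hTc, hTi⟩ := h𝒜 hA
    have h1 := hpow A.card hAne.card_pos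
    obtain ⟨V, hV⟩ := Finset.card_pos.mp (by omega : 0 < 𝒯.card)
    have h2 := Finset.card_le_card (sf_core_subset 𝒯 A hTi (by omega) V hV)
    have h3 := hsize V (h𝒯 hV)
    have h4 := hss A hA
    omega
  have hm : ∀ n, X.card + 1 ≤ n → δ * γ ^ X.card * γ ≤ δ * γ ^ n := by
    intro n hn
    rw [mul_assoc, ← pow_succ]
    exact Nat.mul_le_mul_left _ (Nat.pow_le_pow_right (by omega) hn)
  have key : ∀ j, j ≤ δ * γ ^ X.card → ∃ 𝒮 : Finset (Finset α), ↑𝒮 ⊆ 𝒱 ∧ 𝒮.card = j ∧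
      (∀ A ∈ 𝒮, ∀ B ∈ 𝒮, A ≠ B → A ∩ B = X) ∧ ∀ A ∈ 𝒮, X ⊆ A ∧ X.card < A.card := by
    intro j
    induction j with
    | zero => intro _; exact ⟨∅, by simp⟩
    | succ j ih =>
      intro hj
      obtain ⟨𝒮, hS, hSc, hSi, hSX⟩ := ih (by omega)
      have hW : (𝒮.biUnion id).card ≤ j * γ := by
        rw [← hSc]
        exact Finset.card_biUnion_le_card_mul _ _ _ (fun V hV => hsize V (hS hV))
      have hlt : j * γ < δ * γ ^ X.card * γ := Nat.mul_lt_mul_of_pos_right (by omega) (by omega)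
      obtain ⟨A, hA, hAW⟩ := sf_avoid 𝒜 X (𝒮.biUnion id) hint (by
        have := hm γ hXγ
        omega)
      obtain ⟨hAne, 𝒯, h𝒯, hTc, hTi⟩ := h𝒜 hA
      have hAX := hss A hA
      obtain ⟨V, hV, hVW⟩ := sf_avoid 𝒯 A (𝒮.biUnion id) hTi (by
        have := hm A.card (by omega)
        omega)
      have h1 := hpow A.card hAne.card_pos
      have hAV : A ⊆ V := sf_core_subset 𝒯 A hTi (by omega) V hV
      have hXV : X ⊆ V := (hsub A hA).trans hAV
      have hXVc : X.card < V.card := hAX.trans_le (Finset.card_le_card hAV)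
      have hVB : ∀ B ∈ 𝒮, V ∩ B = X := by
        intro B hB
        apply Finset.Subset.antisymm
        · intro x hx
          rw [Finset.mem_inter] at hx
          have hxW : x ∈ 𝒮.biUnion id := Finset.mem_biUnion.mpr ⟨B, hB, hx.2⟩
          exact hAW (Finset.mem_inter.mpr ⟨hVW (Finset.mem_inter.mpr ⟨hx.1, hxW⟩), hxW⟩)
        · exact Finset.subset_inter hXV (hSX B hB).1
      have hVn : V ∉ 𝒮 := by
        intro h
        have := hVB V h
        rw [Finset.inter_self] at this
        rw [this] at hXVc
        omega
      refine ⟨insert V 𝒮, ?_, ?_, ?_, ?_⟩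
      · rw [Finset.coe_insert]
        exact Set.insert_subset (h𝒯 hV) hS
      · rw [Finset.card_insert_of_notMem hVn, hSc]
      · intro P hP Q hQ hne
        rcases Finset.mem_insert.mp hP with rfl | hP2
        · rcases Finset.mem_insert.mp hQ with rfl | hQ2
          · exact absurd rfl hne
          · exact hVB Q hQ2
        · rcases Finset.mem_insert.mp hQ with rfl | hQ2
          · rw [Finset.inter_comm]; exact hVB P hP2
          · exact hSi P hP2 Q hQ2 hne
      · intro P hP
        rcases Finset.mem_insert.mp hP with rfl | hP2
        · exact ⟨hXV, hXVc⟩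
        · exact hSX P hP2
  obtain ⟨𝒮, hS, hSc, hSi, _⟩ := key _ le_rfl
  exact ⟨hX, 𝒮, hS, hSc, hSi⟩
end

section
/- Let G be a finite simple graph, σ a linear order on V(G), and γ ≥ 2, δ ≥ 1 integers. Let 𝒱 be a collection of subsets of V(G) such that every V ∈ 𝒱 satisfies |V| ≤ γ and G[V] is connected. Let Γ be the collection of all nonempty X ⊆ V(G) that are the core of a (δ·γ^{|X|})-sunflower in 𝒱, and Γ* its inclusion-minimal members. If a vertex v γ-witnesses (with respect to σ) at least (δ·γ^γ)^{γ+1}·γ! members of Γ*, then v γ-witnesses δ pairwise disjoint members of 𝒱. -/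
/-- `N_G[V]`: the closed neighborhood of the vertex set `V` in `G`. -/
def closedNbhd {α : Type} (G : SimpleGraph α) (V : Finset α) : Set α :=
  ↑V ∪ {u | ∃ x ∈ V, G.Adj u x}

/-- `v` `t`-witnesses `V` with respect to `σ`: some `u ∈ N_G[V]` has `v ∈ WR_t(G,σ,u)`. -/
def Witnesses {α : Type} (G : SimpleGraph α) (σ : LinearOrder α) (t : ℕ)
    (v : α) (V : Finset α) : Prop :=
  ∃ u ∈ closedNbhd G V, v ∈ WR G σ t u

theorem petal_avoid {α : Type} [DecidableEq α] (P : Finset (Finset α)) (X F : Finset α)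
    (h : ∀ A ∈ P, ∀ B ∈ P, A ≠ B → A ∩ B = X) (hc : F.card < P.card) :
    ∃ V ∈ P, ∀ x ∈ V, x ∈ F → x ∈ X := by
  by_contra hcon
  push Not at hcon
  have hcon' : ∀ V, ∃ x, V ∈ P → x ∈ V ∧ x ∈ F ∧ x ∉ X := by
    intro V
    by_cases hV : V ∈ P
    · obtain ⟨x, hx⟩ := hcon V hV
      exact ⟨x, fun _ => hx⟩
    · obtain ⟨W, hW⟩ : P.Nonempty := Finset.card_pos.1 (by omega)
      obtain ⟨x, hx⟩ := hcon W hW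
      exact ⟨x, fun h => absurd h hV⟩
  choose f hf using hcon'
  have hf1 := fun V hV => (hf V hV).1
  have hf2 := fun V hV => (hf V hV).2.1
  have hf3 := fun V hV => (hf V hV).2.2
  obtain ⟨A, hA, B, hB, hne, he⟩ :=
    Finset.exists_ne_map_eq_of_card_lt_of_maps_to hc (f := f) (fun A hA => hf2 A hA)
  apply hf3 A hA
  rw [← h A hA B hB hne, Finset.mem_inter]
  exact ⟨hf1 A hA, he ▸ hf1 B hB⟩

theorem core_sub {α : Type} [DecidableEq α] (P : Finset (Finset α)) (X : Finset α)
    (h : ∀ A ∈ P, ∀ B ∈ P, A ≠ B → A ∩ B = X) (hc : 1 < P.card) :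
    ∀ A ∈ P, X ⊆ A := by
  intro A hA
  obtain ⟨B, hB, hne⟩ := Finset.exists_mem_ne hc A
  rw [← h A hA B hB hne.symm]
  exact Finset.inter_subset_left

theorem sunflower_aux {α : Type} [DecidableEq α] (p : ℕ) (hp : 2 ≤ p) (k : ℕ) :
    ∀ F : Finset (Finset α), (∀ A ∈ F, A.card ≤ k) → p ^ (k + 1) * Nat.factorial k ≤ F.card →
    ∃ S : Finset (Finset α), S ⊆ F ∧ S.card = p ∧ ∃ Y : Finset α,
      ∀ A ∈ S, ∀ B ∈ S, A ≠ B → A ∩ B = Y := by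
  induction k with
  | zero =>
    intro F hF hc
    exfalso
    have h1 : F ⊆ {∅} := by
      intro A hA
      have := hF A hA
      simpa using this
    have := Finset.card_le_card h1
    simp at this hc
    omega
  | succ k ih =>
    intro F hF hc
    obtain ⟨M, hM, hmax⟩ := Finset.exists_max_image
      (F.powerset.filter (fun M => ∀ A ∈ M, ∀ B ∈ M, A ≠ B → A ∩ B = ∅)) Finset.card
      ⟨∅, by simp⟩
    simp only [Finset.mem_filter, Finset.mem_powerset] at hM hmax
    obtain ⟨hMF, hMd⟩ := hM
    by_cases hMp : p ≤ M.card
    · obtain ⟨S, hS, hSc⟩ := Finset.exists_subset_card_eq hMp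
      exact ⟨S, hS.trans hMF, hSc, ∅, fun A hA B hB => hMd A (hS hA) B (hS hB)⟩
    push Not at hMp
    have hU : (M.biUnion id).card ≤ (p - 1) * (k + 1) := by
      refine (Finset.card_biUnion_le_card_mul M id (k+1) (fun A hA => hF A (hMF hA))).trans ?_
      exact Nat.mul_le_mul_right _ (by omega)
    have hhit : ∀ A ∈ F, A.Nonempty → ∃ x ∈ M.biUnion id, x ∈ A := by
      intro A hA hAn
      by_contra hcon
      push Not at hcon
      have hd : ∀ B ∈ M, A ∩ B = ∅ := by
        intro B hB
        ext x
        simp only [Finset.mem_inter, Finset.notMem_empty, iff_false, not_and]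
        intro hx hxB
        exact hcon x (Finset.mem_biUnion.2 ⟨B, hB, hxB⟩) hx
      have hAM : A ∉ M := by
        intro h
        have := hd A h
        simp at this
        simp [this] at hAn
      have := hmax (insert A M) ⟨Finset.insert_subset hA hMF, by
        intro C hC D hD hne
        rcases Finset.mem_insert.1 hC with rfl | hC' <;> rcases Finset.mem_insert.1 hD with rfl | hD'
        · exact absurd rfl hne
        · exact hd D hD'
        · rw [Finset.inter_comm]; exact hd C hC'
        · exact hMd C hC' D hD' hne⟩
      rw [Finset.card_insert_of_notMem hAM] at this
      omega
    have hx : ∃ x ∈ M.biUnion id, p ^ (k + 1) * Nat.factorial k ≤ (F.filter (fun A => x ∈ A)).card := by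
      by_contra hcon
      push Not at hcon
      have hsub : F ⊆ insert ∅ ((M.biUnion id).biUnion (fun x => F.filter (fun A => x ∈ A))) := by
        intro A hA
        rcases A.eq_empty_or_nonempty with rfl | hn
        · simp
        · obtain ⟨x, hx, hxA⟩ := hhit A hA hn
          exact Finset.mem_insert_of_mem (Finset.mem_biUnion.2 ⟨x, hx, by simp [hA, hxA]⟩)
      have h1 := (Finset.card_le_card hsub).trans (Finset.card_insert_le _ _)
      have h2 := Finset.card_biUnion_le_card_mul (M.biUnion id)
        (fun x => F.filter (fun A => x ∈ A)) _ (fun x hx => (hcon x hx).le)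
      have h3 := h2.trans (Nat.mul_le_mul_right _ hU)
      obtain ⟨q, rfl⟩ : ∃ q, p = q + 1 := ⟨p - 1, by omega⟩
      have h4 : 2 ≤ (q + 1) ^ (k + 1) := hp.trans (Nat.le_self_pow (by omega) _)
      have h5 : 1 ≤ Nat.factorial k := Nat.factorial_pos k
      rw [Nat.factorial_succ, pow_succ] at hc
      simp only [Nat.add_sub_cancel] at h3
      have h6 : 2 ≤ (q + 1) ^ (k + 1) * Nat.factorial k := by nlinarith
      have h7 : (q + 1) ^ (k + 1) * (q + 1) * ((k + 1) * Nat.factorial k)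
        = q * (k + 1) * ((q + 1) ^ (k + 1) * Nat.factorial k)
          + (k + 1) * ((q + 1) ^ (k + 1) * Nat.factorial k) := by ring
      have h8 : 2 ≤ (k + 1) * ((q + 1) ^ (k + 1) * Nat.factorial k) := by nlinarith
      omega
    obtain ⟨x, -, hxc⟩ := hx
    have hinj : Set.InjOn (fun A : Finset α => A.erase x) (F.filter (fun A => x ∈ A) : Finset (Finset α)) := by
      intro A hA B hB h
      simp only [Finset.coe_filter, Set.mem_ofPred_eq] at hA hB
      have h' : A.erase x = B.erase x := h
      rw [← Finset.insert_erase hA.2, ← Finset.insert_erase hB.2, h']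
    obtain ⟨S, hS, hSc, Y, hY⟩ := ih ((F.filter (fun A => x ∈ A)).image (fun A => A.erase x))
      (by
        intro A hA
        obtain ⟨B, hB', rfl⟩ := Finset.mem_image.1 hA
        rw [Finset.mem_filter] at hB'
        have := hF B hB'.1
        rw [Finset.card_erase_of_mem hB'.2]
        omega)
      (by rw [Finset.card_image_of_injOn hinj]; exact hxc)
    have hSx : ∀ A ∈ S, x ∉ A ∧ insert x A ∈ F := by
      intro A hA
      obtain ⟨B, hB', rfl⟩ := Finset.mem_image.1 (hS hA)
      rw [Finset.mem_filter] at hB'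
      simp [Finset.insert_erase hB'.2, hB'.1]
    refine ⟨S.image (insert x), ?_, ?_, insert x Y, ?_⟩
    · intro A hA
      obtain ⟨B, hB', rfl⟩ := Finset.mem_image.1 hA
      exact (hSx B hB').2
    · rw [Finset.card_image_of_injOn, hSc]
      intro A hA B hB h
      have h' : insert x A = insert x B := h
      rw [← Finset.erase_insert (hSx A hA).1, ← Finset.erase_insert (hSx B hB).1, h']
    · intro A hA B hB hne
      obtain ⟨A, hA', rfl⟩ := Finset.mem_image.1 hA
      obtain ⟨B, hB', rfl⟩ := Finset.mem_image.1 hB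
      rw [← Finset.insert_inter_distrib, hY A hA' B hB' (fun h => hne (by rw [h]))]

theorem extend_aux {α : Type} [DecidableEq α] (𝒱 : Set (Finset α)) (γ m : ℕ)
    (hγ : 2 ≤ γ) (hm : 1 ≤ m)
    (hsize : ∀ V ∈ 𝒱, V.card ≤ γ) (S : Finset (Finset α)) (hSm : S.card = m) (Y : Finset α)
    (hS : ∀ A ∈ S, ∀ B ∈ S, A ≠ B → A ∩ B = Y) (hYS : ∀ A ∈ S, Y ⊆ A)
    (hcore : ∀ X ∈ S, ∃ r, m * γ ≤ r ∧ IsSunflowerWithCore 𝒱 r X)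
    (T : Finset (Finset α)) : T ⊆ S →
    ∃ g : Finset α → Finset α, (∀ X ∈ S, X ⊆ g X) ∧ (∀ X ∈ S, (g X).card ≤ γ) ∧
      (∀ A ∈ S, ∀ B ∈ S, A ≠ B → g A ∩ g B = Y) ∧ ∀ X ∈ T, g X ∈ 𝒱 := by
  have hmg : 1 < m * γ := by nlinarith
  induction T using Finset.induction_on with
  | empty =>
    intro _
    refine ⟨id, fun X _ => subset_rfl, ?_, hS, by simp⟩
    intro X hX
    obtain ⟨r, hr, P, hP, hPc, hPX⟩ := hcore X hX
    obtain ⟨V, hV⟩ : P.Nonempty := Finset.card_pos.1 (by omega)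
    exact (Finset.card_le_card (core_sub P X hPX (by omega) V hV)).trans (hsize V (hP hV))
  | insert X T hXT ih =>
    intro hTS
    obtain ⟨g, g1, g2, g3, g4⟩ := ih ((Finset.subset_insert _ _).trans hTS)
    have hX : X ∈ S := hTS (Finset.mem_insert_self _ _)
    obtain ⟨r, hr, P, hP, hPc, hPX⟩ := hcore X hX
    have hF : ((S.erase X).biUnion g).card < P.card := by
      have := Finset.card_biUnion_le_card_mul (S.erase X) g γ
        (fun A hA => g2 A (Finset.mem_of_mem_erase hA))
      rw [Finset.card_erase_of_mem hX, hSm] at this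
      obtain ⟨q, rfl⟩ : ∃ q, m = q + 1 := ⟨m - 1, by omega⟩
      simp only [Nat.add_sub_cancel] at this
      rw [add_mul] at hr
      omega
    obtain ⟨V, hV, hVF⟩ := petal_avoid P X _ hPX hF
    have hXV : X ⊆ V := core_sub P X hPX (by omega) V hV
    have key : ∀ B ∈ S, B ≠ X → V ∩ g B = Y := by
      intro B hB hne
      ext x
      constructor
      · intro hx
        rw [Finset.mem_inter] at hx
        rw [← g3 X hX B hB hne.symm, Finset.mem_inter]
        exact ⟨g1 X hX (hVF x hx.1 (Finset.mem_biUnion.2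
          ⟨B, Finset.mem_erase.2 ⟨hne, hB⟩, hx.2⟩)), hx.2⟩
      · intro hx
        exact Finset.mem_inter.2 ⟨hXV (hYS X hX hx), g1 B hB (hYS B hB hx)⟩
    refine ⟨Function.update g X V, ?_, ?_, ?_, ?_⟩
    · intro A hA
      by_cases h : A = X
      · subst h; simpa using hXV
      · simpa [h] using g1 A hA
    · intro A hA
      by_cases h : A = X
      · subst h; simpa using hsize V (hP hV)
      · simpa [h] using g2 A hA
    · intro A hA B hB hne
      by_cases h : A = X
      · subst h
        simpa [hne.symm] using key B hB hne.symm
      · by_cases h' : B = X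
        · subst h'
          rw [Finset.inter_comm]
          simpa [h] using key A hA h
        · simpa [h, h'] using g3 A hA B hB hne
    · intro A hA
      by_cases h : A = X
      · subst h; simpa using hP hV
      · simpa [h] using g4 A (Finset.mem_of_mem_insert_of_ne hA h)

/-- let `𝒱` consist of subsets of `V(G)` of size at most `γ` inducing
connected subgraphs, with `γ ≥ 2` and `δ ≥ 1`.  If a vertex `v` `γ`-witnesses at
least `(δ·γ^γ)^{γ+1}·γ!` members of `Γ*`, then `v` `γ`-witnesses `δ` pairwise
disjoint members of `𝒱`. -/
theorem stmt12 {α : Type} [Fintype α] [DecidableEq α]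
    (G : SimpleGraph α) (σ : LinearOrder α) (γ δ : ℕ) (hγ : 2 ≤ γ) (hδ : 1 ≤ δ)
    (𝒱 : Set (Finset α))
    (hsize : ∀ V ∈ 𝒱, V.card ≤ γ)
    (hconn : ∀ V ∈ 𝒱, (G.induce (↑V : Set α)).Connected)
    (v : α)
    (hwit : ∃ 𝒲 : Finset (Finset α), ↑𝒲 ⊆ GammaMin 𝒱 γ δ ∧
      (δ * γ ^ γ) ^ (γ + 1) * Nat.factorial γ ≤ 𝒲.card ∧
      ∀ X ∈ 𝒲, Witnesses G σ γ v X) :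
    ∃ 𝒟 : Finset (Finset α), ↑𝒟 ⊆ 𝒱 ∧ δ ≤ 𝒟.card ∧
      (∀ A ∈ 𝒟, ∀ B ∈ 𝒟, A ≠ B → Disjoint A B) ∧
      ∀ V ∈ 𝒟, Witnesses G σ γ v V := by
  obtain ⟨W, hW, hWc, hWw⟩ := hwit
  have hγpos : 0 < γ := by omega
  have hcard : ∀ X ∈ W, X.card ≤ γ := by
    intro X hX
    obtain ⟨⟨hn, P, hP, hPc, hPX⟩, -⟩ := hW hX
    have h1 : γ ≤ γ ^ X.card := Nat.le_self_pow (Finset.card_pos.2 hn).ne' _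
    have h2 : 2 ≤ P.card := by rw [hPc]; nlinarith
    obtain ⟨V, hV⟩ : P.Nonempty := Finset.card_pos.1 (by omega)
    exact (Finset.card_le_card (core_sub P X hPX (by omega) V hV)).trans (hsize V (hP hV))
  have hp : 2 ≤ δ * γ ^ γ := by
    have h1 : γ ≤ γ ^ γ := Nat.le_self_pow (by omega) _
    nlinarith
  obtain ⟨S, hSW, hSc, Y, hY⟩ := sunflower_aux _ hp γ W hcard hWc
  have hYS := core_sub S Y hY (by omega)
  have hYss : ∀ A ∈ S, Y ≠ A := by
    intro A hA h
    obtain ⟨B, hB, hne⟩ := Finset.exists_mem_ne (show 1 < S.card by omega) A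
    have h1 : A ⊆ B := h ▸ hYS B hB
    exact hne ((hW (hSW hB)).2 A (hW (hSW hA)).1 h1).symm
  have hYcard : ∀ A ∈ S, Y.card + 1 ≤ A.card := fun A hA =>
    Finset.card_lt_card ((hYS A hA).ssubset_of_ne (hYss A hA))
  obtain ⟨A0, hA0⟩ : S.Nonempty := Finset.card_pos.1 (by omega)
  have hmp : δ * γ ^ Y.card ≤ S.card := by
    rw [hSc]
    refine Nat.mul_le_mul_left _ (Nat.pow_le_pow_right hγpos ?_)
    have := hYcard A0 hA0
    have := hcard A0 (hSW hA0)
    omega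
  obtain ⟨S', hS', hSc'⟩ := Finset.exists_subset_card_eq hmp
  have hm : 1 ≤ δ * γ ^ Y.card := Nat.mul_pos hδ (pow_pos hγpos _)
  obtain ⟨g, g1, g2, g3, g4⟩ := extend_aux 𝒱 γ _ hγ hm hsize S' hSc' Y
    (fun A hA B hB => hY A (hS' hA) B (hS' hB)) (fun A hA => hYS A (hS' hA))
    (fun X hX => ⟨δ * γ ^ X.card, by
      rw [mul_assoc, ← pow_succ]
      exact Nat.mul_le_mul_left _ (Nat.pow_le_pow_right hγpos (hYcard X (hS' hX))),
      (hW (hSW (hS' hX))).1.2⟩) S' subset_rfl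
  have hginj : Set.InjOn g (S' : Set (Finset α)) := by
    intro A hA B hB h
    by_contra hne
    have h1 := g3 A hA B hB hne
    rw [h, Finset.inter_self] at h1
    have h2 := g1 B hB
    rw [h1] at h2
    exact hYss B (hS' hB) ((hYS B (hS' hB)).antisymm h2)
  have hsun : ∀ A ∈ S'.image g, ∀ B ∈ S'.image g, A ≠ B → A ∩ B = Y := by
    intro A hA B hB hne
    obtain ⟨A, hA', rfl⟩ := Finset.mem_image.1 hA
    obtain ⟨B, hB', rfl⟩ := Finset.mem_image.1 hB
    exact g3 A hA' B hB' (fun h => hne (by rw [h]))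
  have hsub : (↑(S'.image g) : Set (Finset α)) ⊆ 𝒱 := by
    intro A hA
    obtain ⟨A, hA', rfl⟩ := Finset.mem_image.1 (Finset.mem_coe.1 hA)
    exact g4 A hA'
  have hgc : (S'.image g).card = δ * γ ^ Y.card := by
    rw [Finset.card_image_of_injOn hginj, hSc']
  rcases Y.eq_empty_or_nonempty with hYe | hYn
  · refine ⟨S'.image g, hsub, ?_, ?_, ?_⟩
    · rw [hgc, hYe]; simp
    · intro A hA B hB hne
      rw [Finset.disjoint_iff_inter_eq_empty, hsun A hA B hB hne, hYe]
    · intro V hV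
      obtain ⟨A, hA', rfl⟩ := Finset.mem_image.1 hV
      obtain ⟨u, hu, hv⟩ := hWw A (hSW (hS' hA'))
      refine ⟨u, ?_, hv⟩
      rcases hu with hu | ⟨x, hx, hux⟩
      · exact Or.inl (g1 A hA' hu)
      · exact Or.inr ⟨x, g1 A hA' hx, hux⟩
  · exact absurd ((hW (hSW hA0)).2 Y ⟨hYn, _, hsub, hgc, hsun⟩ (hYS A0 hA0)) (hYss A0 hA0)
end

section
/- Let ℱ be a finite set of connected graphs, each with at most γ vertices (γ ≥ 1), and let G be a finite simple graph with n vertices and maximum degree Δ ≥ 2 such that every vertex of G lies in some subgraph of G isomorphic to a member of ℱ. Then G contains at least n/Δ^{2γ} pairwise vertex-disjoint subgraphs, each isomorphic to a member of ℱ; consequently, every set S ⊆ V(G) such that G − S contains no subgraph isomorphic to a member of ℱ satisfies |S| ≥ n/Δ^{2γ}. -/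
/-- `f` realizes a subgraph copy of `F` in `G`: the injective map `f` carries
edges of `F` to edges of `G`. -/
def IsSubCopy {α β : Type} (G : SimpleGraph α) (F : SimpleGraph β) (f : β ↪ α) : Prop :=
  ∀ u v, F.Adj u v → G.Adj (f u) (f v)

open Classical in
/-- ball-like finite sets -/
noncomputable def auxBall {α : Type} [Fintype α] (G : SimpleGraph α) : ℕ → α → Finset α
  | 0, v => {v}
  | r + 1, v => insert v ((Finset.univ.filter (fun w => G.Adj v w)).biUnion (auxBall G r))

lemma auxBall_card {α : Type} [Fintype α] (G : SimpleGraph α) [DecidableRel G.Adj]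
    (Δ : ℕ) (hΔ : 2 ≤ Δ) (hdeg : ∀ v, G.degree v ≤ Δ) (r : ℕ) :
    ∀ v, (auxBall G r v).card + 1 ≤ Δ ^ (r + 1) := by
  classical
  induction r with
  | zero => intro v; simpa [auxBall] using hΔ
  | succ r ih =>
    intro v
    have h1 : (auxBall G (r + 1) v).card ≤
        ((Finset.univ.filter (fun w => G.Adj v w)).biUnion (auxBall G r)).card + 1 := by
      rw [auxBall]
      convert Finset.card_insert_le _ _
    have h2 : ((Finset.univ.filter (fun w => G.Adj v w)).biUnion (auxBall G r)).card ≤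
        (Finset.univ.filter (fun w => G.Adj v w)).card * (Δ ^ (r + 1) - 1) := by
      apply Finset.card_biUnion_le_card_mul
      intro w _
      have := ih w
      omega
    have h3 : (Finset.univ.filter (fun w => G.Adj v w)).card ≤ Δ := by
      have := hdeg v
      rw [← SimpleGraph.card_neighborFinset_eq_degree, SimpleGraph.neighborFinset_eq_filter] at this
      exact this
    have h4 := Nat.mul_le_mul_right (Δ ^ (r + 1) - 1) h3
    have h5 : Δ * (Δ ^ (r + 1) - 1) + Δ = Δ ^ (r + 1 + 1) := by
      have : 1 ≤ Δ ^ (r + 1) := Nat.one_le_pow _ _ (by omega)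
      obtain ⟨k, hk⟩ := Nat.exists_eq_add_of_le this
      rw [pow_succ Δ (r + 1), hk]
      simp
      ring
    omega

lemma mem_auxBall {α : Type} [Fintype α] (G : SimpleGraph α) {v w : α} (p : G.Walk v w) :
    ∀ r, p.length ≤ r → w ∈ auxBall G r v := by
  classical
  induction p with
  | nil => intro r _; cases r <;> simp [auxBall]
  | cons h p ih =>
    intro r hr
    cases r with
    | zero => simp at hr
    | succ r =>
      simp only [SimpleGraph.Walk.length_cons] at hr
      rw [auxBall]
      apply Finset.mem_insert_of_mem
      rw [Finset.mem_biUnion]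
      exact ⟨_, by simpa using h, ih r (by omega)⟩

lemma copy_walk {α β : Type} [Fintype β] (G : SimpleGraph α) (F : SimpleGraph β) (f : β ↪ α)
    (hf : IsSubCopy G F f) (hc : F.Connected) (x y : β) :
    ∃ p : G.Walk (f x) (f y), p.length + 1 ≤ Fintype.card β := by
  obtain ⟨p, hp⟩ := hc.exists_isPath x y
  let φ : F →g G := ⟨f, fun {a b} h => hf a b h⟩
  refine ⟨p.map φ, ?_⟩
  rw [SimpleGraph.Walk.length_map]
  exact hp.length_lt

/-- let `ℱ` be a finite family of connected graphs, each with at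
most `γ` vertices, and let `G` have `n` vertices, maximum degree at most `Δ ≥ 2`,
and every vertex of `G` lying in some subgraph copy of a member of `ℱ`.  Then `G`
contains at least `n/Δ^{2γ}` pairwise vertex-disjoint subgraph copies of members
of `ℱ`, and consequently every `S ⊆ V(G)` whose removal destroys all copies of
members of `ℱ` satisfies `|S| ≥ n/Δ^{2γ}`. -/
theorem stmt14 {ι : Type} [Fintype ι] {β : ι → Type} [∀ i, Fintype (β i)]
    [∀ i, Nonempty (β i)]
    (F : ∀ i, SimpleGraph (β i)) (γ : ℕ) (hγ : 1 ≤ γ)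
    (hconn : ∀ i, (F i).Connected)
    (hcard : ∀ i, Fintype.card (β i) ≤ γ)
    {α : Type} [Fintype α] (G : SimpleGraph α) [DecidableRel G.Adj]
    (Δ : ℕ) (hΔ : 2 ≤ Δ) (hdeg : ∀ v, G.degree v ≤ Δ)
    (hcover : ∀ v : α, ∃ i, ∃ f : β i ↪ α, IsSubCopy G (F i) f ∧ v ∈ Set.range f) :
    (∃ (N : ℕ) (idx : Fin N → ι) (f : ∀ j, β (idx j) ↪ α),
      (Fintype.card α : ℝ) / (Δ : ℝ) ^ (2 * γ) ≤ (N : ℝ) ∧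
      (∀ j, IsSubCopy G (F (idx j)) (f j)) ∧
      (∀ j j', j ≠ j' → ∀ x y, f j x ≠ f j' y)) ∧
    ∀ S : Finset α,
      (∀ i, ¬ ∃ f : β i ↪ α, (∀ x, f x ∉ S) ∧ IsSubCopy G (F i) f) →
      (Fintype.card α : ℝ) / (Δ : ℝ) ^ (2 * γ) ≤ (S.card : ℝ) := by
  classical
  have hA : ∃ (N : ℕ) (idx : Fin N → ι) (f : ∀ j, β (idx j) ↪ α),
      (Fintype.card α : ℝ) / (Δ : ℝ) ^ (2 * γ) ≤ (N : ℝ) ∧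
      (∀ j, IsSubCopy G (F (idx j)) (f j)) ∧
      (∀ j j', j ≠ j' → ∀ x y, f j x ≠ f j' y) := by
    choose i f hf hv using hcover
    let P : Finset α → Prop := fun T => ∀ s ∈ T, ∀ t ∈ T, s ≠ t → ∀ x y, f s x ≠ f t y
    obtain ⟨T, hT, hmax⟩ := Finset.exists_max_image (Finset.univ.filter P) Finset.card
      ⟨∅, by simp [P]⟩
    have hPT : P T := by simpa using hT
    have key : ∀ v, ∃ t ∈ T, ∃ x y, f v x = f t y := by
      intro v
      by_contra hcon
      push Not at hcon
      have hvT : v ∉ T := by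
        intro h
        obtain ⟨x, hx⟩ := hv v
        exact hcon v h x x rfl
      have hP : P (insert v T) := by
        intro s hs t ht hst x y
        rw [Finset.mem_insert] at hs ht
        rcases hs with rfl | hs <;> rcases ht with rfl | ht
        · exact absurd rfl hst
        · exact hcon t ht x y
        · exact (hcon s hs y x).symm
        · exact hPT s hs t ht hst x y
      have := hmax (insert v T) (by simpa using hP)
      rw [Finset.card_insert_of_notMem hvT] at this
      omega
    have hsub : (Finset.univ : Finset α) ⊆ T.biUnion (auxBall G (2 * γ - 1)) := by
      intro v _
      obtain ⟨t, ht, x, y, hxy⟩ := key v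
      rw [Finset.mem_biUnion]
      refine ⟨t, ht, ?_⟩
      obtain ⟨a, ha⟩ := hv v
      obtain ⟨b, hb⟩ := hv t
      obtain ⟨p, hp⟩ := copy_walk G _ (f t) (hf t) (hconn _) b y
      obtain ⟨q, hq⟩ := copy_walk G _ (f v) (hf v) (hconn _) x a
      have h1 := hcard (i t)
      have h2 := hcard (i v)
      have := mem_auxBall G (((p.copy hb hxy.symm).append (q.copy rfl ha))) (2 * γ - 1)
        (by simp only [SimpleGraph.Walk.length_append, SimpleGraph.Walk.length_copy]; omega)
      exact this
    have hcardle : Fintype.card α ≤ T.card * Δ ^ (2 * γ) := by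
      calc Fintype.card α = (Finset.univ : Finset α).card := rfl
        _ ≤ _ := Finset.card_le_card hsub
        _ ≤ _ := by
          apply Finset.card_biUnion_le_card_mul
          intro t _
          have := auxBall_card G Δ hΔ hdeg (2 * γ - 1) t
          rw [show 2 * γ - 1 + 1 = 2 * γ by omega] at this
          omega
    let e := T.equivFin.symm
    refine ⟨T.card, fun j => i (e j), fun j => f (e j), ?_, fun j => hf _, ?_⟩
    · rw [div_le_iff₀ (by positivity)]
      exact_mod_cast hcardle
    · intro j j' hjj
      apply hPT _ (e j).2 _ (e j').2
      intro h
      exact hjj (e.injective (Subtype.ext h))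
  refine ⟨hA, ?_⟩
  intro S hS
  obtain ⟨N, idx, f, hN, hf, hd⟩ := hA
  refine hN.trans ?_
  have hit : ∀ j, ∃ x, f j x ∈ S := by
    intro j
    by_contra hcon
    push Not at hcon
    exact hS _ ⟨f j, hcon, hf j⟩
  choose x hx using hit
  have : Fintype.card (Fin N) ≤ Fintype.card S :=
    Fintype.card_le_of_injective (fun j => (⟨f j (x j), hx j⟩ : S)) (by
      intro j j' h
      by_contra hne
      exact hd j j' hne _ _ (congrArg Subtype.val h))
  simp only [Fintype.card_fin, Fintype.card_coe] at this
  exact_mod_cast this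
end

section
/- Let ℱ be a finite nonempty set of graphs, each with at least one and at most γ vertices, where γ ≥ 2. Let ε > 0 and let k be an integer with k ≥ (1+ε)·(γ−1)/ε. Let V₀,V₁,…,V_r be a k-clique decomposition of a finite simple graph G, and let S₀ ⊆ V₀ be a solution for Subgraph Hitting on (G[V₀],ℱ) with |S₀| ≤ (1+ε)·opt(G[V₀],ℱ). Then S = S₀ ∪ V₁ ∪ … ∪ V_r is a solution for Subgraph Hitting on (G,ℱ) and |S| ≤ (1+ε)·opt(G,ℱ). -/
/-- `G` contains a subgraph isomorphic to `F` whose vertices all lie in the set `A`. -/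
def HasSubCopyIn {α β : Type} (G : SimpleGraph α) (F : SimpleGraph β)
    (A : Set α) : Prop :=
  ∃ f : β ↪ α, (∀ x, f x ∈ A) ∧ ∀ u v, F.Adj u v → G.Adj (f u) (f v)

/-- `S` is a solution for Subgraph Hitting on `(G[A], ℱ)`: after deleting `S`
from `A`, no copy of a member of the family `F` remains inside `A`. -/
def IsSubSolutionOn {α ι : Type} {β : ι → Type} (G : SimpleGraph α)
    (F : ∀ i, SimpleGraph (β i)) (A S : Finset α) : Prop :=
  ∀ i, ¬ HasSubCopyIn G (F i) ((↑A : Set α) \ (↑S : Set α))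

/-- `opt(G[A], ℱ)`: minimum size of a solution for Subgraph Hitting on `(G[A], ℱ)`. -/
noncomputable def optSubOn {α ι : Type} {β : ι → Type} (G : SimpleGraph α)
    (F : ∀ i, SimpleGraph (β i)) (A : Finset α) : ℕ :=
  sInf {n | ∃ S : Finset α, S ⊆ A ∧ IsSubSolutionOn G F A S ∧ S.card = n}

/-- let `ℱ` be a finite nonempty family of graphs each with between
`1` and `γ` vertices (`γ ≥ 2`), let `ε > 0` and `k ≥ (1+ε)(γ−1)/ε`.  Let
`V₀, V₁, …, V_r` be a `k`-clique decomposition of `G` and let `S₀ ⊆ V₀` be a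
solution for Subgraph Hitting on `(G[V₀], ℱ)` with `|S₀| ≤ (1+ε)·opt(G[V₀], ℱ)`.
Then `S = S₀ ∪ V₁ ∪ … ∪ V_r` is a solution for Subgraph Hitting on `(G, ℱ)` and
`|S| ≤ (1+ε)·opt(G, ℱ)`. -/
theorem stmt16 {ι : Type} [Fintype ι] [Nonempty ι] {β : ι → Type}
    [∀ i, Fintype (β i)]
    (F : ∀ i, SimpleGraph (β i)) (γ : ℕ) (hγ : 2 ≤ γ)
    (hcard : ∀ i, 1 ≤ Fintype.card (β i) ∧ Fintype.card (β i) ≤ γ)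
    {α : Type} [Fintype α] [DecidableEq α] (G : SimpleGraph α)
    (ε : ℝ) (hε : 0 < ε) (k : ℕ)
    (hk : (1 + ε) * ((γ : ℝ) - 1) / ε ≤ (k : ℝ))
    (r : ℕ) (V0 : Finset α) (V : Fin r → Finset α)
    (hdisj0 : ∀ i, Disjoint V0 (V i))
    (hdisj : ∀ i j, i ≠ j → Disjoint (V i) (V j))
    (hcover : V0 ∪ Finset.univ.biUnion V = Finset.univ)
    (hV0free : ∀ T : Finset α, T ⊆ V0 → ¬ G.IsNClique k T)
    (hVclique : ∀ i, G.IsNClique k (V i))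
    (S0 : Finset α) (hS0sub : S0 ⊆ V0)
    (hS0sol : IsSubSolutionOn G F V0 S0)
    (hS0apx : (S0.card : ℝ) ≤ (1 + ε) * (optSubOn G F V0 : ℝ)) :
    IsSubSolutionOn G F Finset.univ (S0 ∪ Finset.univ.biUnion V) ∧
      (((S0 ∪ Finset.univ.biUnion V).card : ℝ) ≤
        (1 + ε) * (optSubOn G F Finset.univ : ℝ)) := by
  classical
  have hmem : ∀ a, a ∈ V0 ∨ a ∈ Finset.univ.biUnion V := by
    intro a
    have : a ∈ V0 ∪ Finset.univ.biUnion V := by rw [hcover]; exact Finset.mem_univ a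
    exact Finset.mem_union.mp this
  have hd0 : Disjoint V0 (Finset.univ.biUnion V) := by
    rw [Finset.disjoint_biUnion_right]
    intro i _
    exact hdisj0 i
  constructor
  · rintro i ⟨f, hf, hadj⟩
    refine hS0sol i ⟨f, fun x => ?_, hadj⟩
    have h1 := (hf x).2
    rw [Finset.mem_coe, Finset.mem_union, not_or] at h1
    refine ⟨?_, ?_⟩
    · exact Finset.mem_coe.mpr ((hmem (f x)).resolve_right h1.2)
    · exact fun h => h1.1 (Finset.mem_coe.mp h)
  · have hne : {n | ∃ S : Finset α, S ⊆ Finset.univ ∧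
        IsSubSolutionOn G F Finset.univ S ∧ S.card = n}.Nonempty := by
      refine ⟨_, Finset.univ, Finset.Subset.refl _, ?_, rfl⟩
      rintro i ⟨f, hf, -⟩
      have hpos : 0 < Fintype.card (β i) := (hcard i).1
      obtain ⟨x⟩ := Fintype.card_pos_iff.mp hpos
      exact (hf x).2 (by simp)
    obtain ⟨S, -, hS, hSc⟩ := Nat.sInf_mem hne
    change S.card = optSubOn G F Finset.univ at hSc
    rw [← hSc]
    have h0 : optSubOn G F V0 ≤ (S ∩ V0).card := by
      refine Nat.sInf_le ⟨S ∩ V0, Finset.inter_subset_right, ?_, rfl⟩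
      rintro i ⟨f, hf, hadj⟩
      refine hS i ⟨f, fun x => ⟨by simp, fun h => (hf x).2 ?_⟩, hadj⟩
      have := (hf x).1
      simp only [Finset.mem_coe, Finset.mem_inter] at *
      exact ⟨h, this⟩
    have hlow : ∀ j, k + 1 ≤ (S ∩ V j).card + γ := by
      intro j
      by_contra hcon
      obtain ⟨i⟩ := (inferInstance : Nonempty ι)
      have hsd : (V j \ S).card + (S ∩ V j).card = k := by
        rw [Finset.inter_comm, Finset.card_sdiff_add_card_inter]
        exact (hVclique j).card_eq
      have hle : Fintype.card (β i) ≤ Fintype.card ↥(V j \ S) := by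
        rw [Fintype.card_coe]
        have := (hcard i).2
        omega
      obtain ⟨g⟩ := Function.Embedding.nonempty_of_card_le hle
      refine hS i ⟨g.trans (Function.Embedding.subtype _), fun x => ⟨by simp, ?_⟩, ?_⟩
      · exact fun h => (Finset.mem_sdiff.mp (g x).2).2 (Finset.mem_coe.mp h)
      · intro u v huv
        refine (hVclique j).isClique (Finset.mem_sdiff.mp (g u).2).1
          (Finset.mem_sdiff.mp (g v).2).1 ?_
        intro h
        exact huv.ne (g.injective (Subtype.ext h))
    have hpw : ((Finset.univ : Finset (Fin r)) : Set (Fin r)).PairwiseDisjoint V :=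
      fun i _ j _ hij => hdisj i j hij
    have hB : (Finset.univ.biUnion V).card = r * k := by
      rw [Finset.card_biUnion (fun i _ j _ hij => hdisj i j hij),
        Finset.sum_congr rfl (fun i _ => (hVclique i).card_eq)]
      simp
    have hSB : (S ∩ Finset.univ.biUnion V).card = ∑ j, (S ∩ V j).card := by
      rw [Finset.inter_biUnion, Finset.card_biUnion]
      intro i _ j _ hij
      exact (hdisj i j hij).mono Finset.inter_subset_right Finset.inter_subset_right
    have hSsplit : (S ∩ V0).card + (S ∩ Finset.univ.biUnion V).card = S.card := by
      rw [← Finset.card_union_of_disjoint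
        (hd0.mono Finset.inter_subset_right Finset.inter_subset_right),
        ← Finset.inter_union_distrib_left, hcover, Finset.inter_univ]
    have hkk : (k : ℝ) * ε ≥ (1 + ε) * ((γ : ℝ) - 1) := by
      rwa [div_le_iff₀ hε] at hk
    have hj : ∀ j, (k : ℝ) ≤ (1 + ε) * ((S ∩ V j).card : ℝ) := by
      intro j
      have h1 : (k : ℝ) + 1 ≤ ((S ∩ V j).card : ℝ) + γ := by exact_mod_cast hlow j
      nlinarith
    have hsum : (r : ℝ) * k ≤ (1 + ε) * ((S ∩ Finset.univ.biUnion V).card : ℝ) := by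
      rw [hSB, Nat.cast_sum, Finset.mul_sum]
      have := Finset.sum_le_sum (fun j (_ : j ∈ (Finset.univ : Finset (Fin r))) => hj j)
      simpa using this
    have hU : ((S0 ∪ Finset.univ.biUnion V).card : ℝ) ≤ S0.card + r * k := by
      have := Finset.card_union_le S0 (Finset.univ.biUnion V)
      rw [hB] at this
      exact_mod_cast this
    have h0' : (optSubOn G F V0 : ℝ) ≤ ((S ∩ V0).card : ℝ) := by exact_mod_cast h0
    have hs' : ((S ∩ V0).card : ℝ) + ((S ∩ Finset.univ.biUnion V).card : ℝ) = S.card := by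
      exact_mod_cast hSsplit
    rw [← hs', mul_add]
    have := mul_le_mul_of_nonneg_left h0' (by linarith : (0:ℝ) ≤ 1 + ε)
    linarith
end

section
/- Let ℱ be a finite set of graphs containing a bipartite graph F, and set γ = |V(F)| with γ ≥ 2. Let ε > 0 and let k be an integer with k ≥ (2+ε)·(γ−1)/ε. Let V₀,V₁,…,V_r be a k-biclique decomposition of a finite simple graph G, and let S₀ ⊆ V₀ be a solution for Subgraph Hitting on (G[V₀],ℱ) with |S₀| ≤ (2+ε)·opt(G[V₀],ℱ). Then S = S₀ ∪ V₁ ∪ … ∪ V_r is a solution for Subgraph Hitting on (G,ℱ) and |S| ≤ (2+ε)·opt(G,ℱ). -/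
/-- `G[A]` is (induced-)isomorphic to the complete bipartite graph `K_{k,k}`. -/
def IsBicliqueOn {α : Type} (G : SimpleGraph α) (k : ℕ) (A : Finset α) : Prop :=
  ∃ f : (Fin k ⊕ Fin k) ↪ α, (∀ x, f x ∈ A) ∧ (∀ y ∈ A, ∃ x, f x = y) ∧
    ∀ u v, (completeBipartiteGraph (Fin k) (Fin k)).Adj u v ↔ G.Adj (f u) (f v)

lemma side_emb {α β : Type} [Fintype β] [DecidableEq α] (k : ℕ) (g : Fin k ↪ α) (T A : Finset α)
    (hg : ∀ x, g x ∈ A) (h : (T ∩ A).card + Fintype.card β ≤ k) :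
    ∃ e : β ↪ Fin k, ∀ x, g (e x) ∉ T := by
  classical
  have h1 : (Finset.univ.filter (fun j => g j ∈ T)).card ≤ (T ∩ A).card := by
    apply Finset.card_le_card_of_injOn g
    · intro x hx
      simp at hx
      simp [hx, hg]
    · exact g.injective.injOn
  have h2 := Finset.card_filter_add_card_filter_not (s := (Finset.univ : Finset (Fin k)))
    (fun j => g j ∈ T)
  simp only [Finset.card_univ, Fintype.card_fin] at h2
  have h3 : Fintype.card β ≤ Fintype.card {j : Fin k // g j ∉ T} := by
    rw [Fintype.card_subtype]
    omega
  obtain ⟨e⟩ := Function.Embedding.nonempty_of_card_le h3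
  exact ⟨e.trans (Function.Embedding.subtype _), fun x => (e x).2⟩

lemma biclique_hit {α β : Type} [Fintype β] [DecidableEq α] (G : SimpleGraph α)
    (F : SimpleGraph β) (hb : F.Colorable 2) (k : ℕ) (A T : Finset α)
    (hA : IsBicliqueOn G k A) (h : (T ∩ A).card + Fintype.card β ≤ k) :
    HasSubCopyIn G F {x | x ∉ T} := by
  obtain ⟨f, hfA, -, hadj⟩ := hA
  obtain ⟨c⟩ := hb
  obtain ⟨a, ha⟩ := side_emb (β := β) k (Function.Embedding.inl.trans f) T A (fun x => hfA _) h
  obtain ⟨b, hb⟩ := side_emb (β := β) k (Function.Embedding.inr.trans f) T A (fun x => hfA _) h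
  simp only [Function.Embedding.trans_apply, Function.Embedding.inl_apply,
    Function.Embedding.inr_apply] at ha hb
  refine ⟨⟨fun x => f (if c x = 0 then Sum.inl (a x) else Sum.inr (b x)), ?_⟩, ?_, ?_⟩
  · intro x y hxy
    have := f.injective hxy
    split_ifs at this <;> simpa using this
  · intro x
    show f (if c x = 0 then Sum.inl (a x) else Sum.inr (b x)) ∉ T
    split_ifs
    · exact ha x
    · exact hb x
  · intro u v huv
    have hc := c.valid huv
    show G.Adj (f _) (f _)
    rw [← hadj]
    by_cases hu : c u = 0 <;> by_cases hv : c v = 0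
    · omega
    · simp [hu, hv]
    · simp [hu, hv]
    · omega

lemma biclique_card {α : Type} [DecidableEq α] (G : SimpleGraph α) (k : ℕ) (A : Finset α)
    (hA : IsBicliqueOn G k A) : A.card = 2 * k := by
  obtain ⟨f, hfA, hs, -⟩ := hA
  have : A = Finset.univ.map f := by
    ext y
    simp only [Finset.mem_map, Finset.mem_univ, true_and]
    exact ⟨hs y, by rintro ⟨x, rfl⟩; exact hfA x⟩
  rw [this]
  simp; omega

/-- let `ℱ` contain a bipartite graph `F i₀` with `γ = |V(F i₀)| ≥ 2`,
let `ε > 0` and `k ≥ (2+ε)(γ−1)/ε`.  Let `V₀, V₁, …, V_r` be a `k`-biclique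
decomposition of `G` and let `S₀ ⊆ V₀` be a solution for Subgraph Hitting on
`(G[V₀], ℱ)` with `|S₀| ≤ (2+ε)·opt(G[V₀], ℱ)`.  Then `S = S₀ ∪ V₁ ∪ … ∪ V_r` is
a solution for Subgraph Hitting on `(G, ℱ)` and `|S| ≤ (2+ε)·opt(G, ℱ)`. -/
theorem stmt17 {ι : Type} [Fintype ι] {β : ι → Type} [∀ i, Fintype (β i)]
    (F : ∀ i, SimpleGraph (β i))
    (i₀ : ι) (hbip : (F i₀).Colorable 2)
    (γ : ℕ) (hγdef : γ = Fintype.card (β i₀)) (hγ : 2 ≤ γ)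
    {α : Type} [Fintype α] [DecidableEq α] (G : SimpleGraph α)
    (ε : ℝ) (hε : 0 < ε) (k : ℕ)
    (hk : (2 + ε) * ((γ : ℝ) - 1) / ε ≤ (k : ℝ))
    (r : ℕ) (V0 : Finset α) (V : Fin r → Finset α)
    (hdisj0 : ∀ i, Disjoint V0 (V i))
    (hdisj : ∀ i j, i ≠ j → Disjoint (V i) (V j))
    (hcover : V0 ∪ Finset.univ.biUnion V = Finset.univ)
    (hV0free : ¬ HasSubCopyIn G (completeBipartiteGraph (Fin k) (Fin k)) (↑V0 : Set α))
    (hVbiclique : ∀ i, IsBicliqueOn G k (V i))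
    (S0 : Finset α) (hS0sub : S0 ⊆ V0)
    (hS0sol : IsSubSolutionOn G F V0 S0)
    (hS0apx : (S0.card : ℝ) ≤ (2 + ε) * (optSubOn G F V0 : ℝ)) :
    IsSubSolutionOn G F Finset.univ (S0 ∪ Finset.univ.biUnion V) ∧
      (((S0 ∪ Finset.univ.biUnion V).card : ℝ) ≤
        (2 + ε) * (optSubOn G F Finset.univ : ℝ)) := by
  have hsol : IsSubSolutionOn G F Finset.univ (S0 ∪ Finset.univ.biUnion V) := by
    rintro i ⟨f, hf, hadj⟩
    refine hS0sol i ⟨f, fun x => ?_, hadj⟩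
    have h1 := hf x
    have h2 : f x ∈ V0 ∪ Finset.univ.biUnion V := by rw [hcover]; exact Finset.mem_univ _
    rw [Finset.mem_union] at h2
    simp only [Set.mem_diff, Finset.mem_coe, Finset.mem_union, not_or] at h1 ⊢
    exact ⟨h2.resolve_right h1.2.2, h1.2.1⟩
  refine ⟨hsol, ?_⟩
  obtain ⟨T, -, hT, hTc⟩ : optSubOn G F Finset.univ ∈
      {n | ∃ S : Finset α, S ⊆ Finset.univ ∧ IsSubSolutionOn G F Finset.univ S ∧ S.card = n} :=
    Nat.sInf_mem ⟨_, _, Finset.subset_univ _, hsol, rfl⟩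
  have hopt0 : optSubOn G F V0 ≤ (T ∩ V0).card := by
    refine Nat.sInf_le ⟨T ∩ V0, Finset.inter_subset_right, ?_, rfl⟩
    rintro i ⟨f, hf, hadj⟩
    refine hT i ⟨f, fun x => ?_, hadj⟩
    have h1 := hf x
    simp only [Set.mem_diff, Finset.mem_coe, Finset.mem_inter, not_and] at h1
    simp only [Set.mem_diff, Finset.mem_coe, Finset.mem_univ, true_and]
    exact fun h => h1.2 h h1.1
  have hlow : ∀ i, k < (T ∩ V i).card + γ := by
    intro i
    by_contra hcon
    rw [hγdef] at hcon
    obtain ⟨f, hf, hadj⟩ := biclique_hit G (F i₀) hbip k (V i) T (hVbiclique i) (by omega)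
    exact hT i₀ ⟨f, fun x => ⟨by simp, by simpa using hf x⟩, hadj⟩
  have hk2 : (2 + ε) * ((γ : ℝ) - 1) ≤ k * ε := (div_le_iff₀ hε).1 hk
  have hVi : ∀ i, ((V i).card : ℝ) ≤ (2 + ε) * ((T ∩ V i).card : ℝ) := by
    intro i
    rw [biclique_card G k (V i) (hVbiclique i)]
    have h1 : (k : ℝ) + 1 ≤ (T ∩ V i).card + γ := by exact_mod_cast hlow i
    push_cast
    nlinarith [mul_le_mul_of_nonneg_left h1 (by linarith : (0 : ℝ) ≤ 2 + ε)]
  have hTcard : T.card = (T ∩ V0).card + ∑ i, (T ∩ V i).card := by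
    rw [← Finset.card_biUnion, ← Finset.card_union_of_disjoint]
    · congr 1
      rw [← Finset.inter_biUnion, ← Finset.inter_union_distrib_left, hcover, Finset.inter_univ]
    · rw [Finset.disjoint_biUnion_right]
      intro i _
      exact (hdisj0 i).mono Finset.inter_subset_right Finset.inter_subset_right
    · intro i _ j _ hij
      exact (hdisj i j hij).mono Finset.inter_subset_right Finset.inter_subset_right
  have hScard : (S0 ∪ Finset.univ.biUnion V).card ≤ S0.card + ∑ i, (V i).card :=
    (Finset.card_union_le _ _).trans (Nat.add_le_add_left Finset.card_biUnion_le _)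
  have hSc : ((S0 ∪ Finset.univ.biUnion V).card : ℝ) ≤ S0.card + ∑ i, ((V i).card : ℝ) := by
    exact_mod_cast hScard
  have hsum : ∑ i, ((V i).card : ℝ) ≤ (2 + ε) * ∑ i, ((T ∩ V i).card : ℝ) := by
    rw [Finset.mul_sum]
    exact Finset.sum_le_sum fun i _ => hVi i
  have h0 : (optSubOn G F V0 : ℝ) ≤ (T ∩ V0).card := by exact_mod_cast hopt0
  have h0' := mul_le_mul_of_nonneg_left h0 (by linarith : (0 : ℝ) ≤ 2 + ε)
  rw [← hTc, hTcard]
  push_cast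
  rw [mul_add]
  linarith
end

section
/- Let c > 0 and 0 ≤ η < 1. There exists a constant C depending only on c and η such that the following holds: for every finite simple graph G with n vertices in which every subgraph H admits a balanced separator of size at most c·|V(H)|^η, and for every β ∈ (0,1], there exists a set S ⊆ V(G) with |S| ≤ β·n such that every connected component of G − S has at most (C/β)^{1/(1−η)} vertices. -/
open Classical in
theorem aux_hom {α β : Type} [Fintype β] (G : SimpleGraph α) (T : Set α)
    (hT : (G.induce T).Preconnected) (hne : T.Nonempty) (G' : SimpleGraph β)
    (f : G.induce T →g G') (hf : Function.Injective f) :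
    ∃ K : G'.ConnectedComponent, (∀ x, f x ∈ K.supp) ∧ T.ncard ≤ K.supp.ncard := by
  obtain ⟨t0, ht0⟩ := hne
  have key : ∀ x, f x ∈ (G'.connectedComponentMk (f ⟨t0, ht0⟩)).supp := by
    intro x
    rw [SimpleGraph.ConnectedComponent.mem_supp_iff, SimpleGraph.ConnectedComponent.eq]
    exact (hT x ⟨t0, ht0⟩).map f
  refine ⟨_, key, ?_⟩
  have h1 : T.ncard = (Set.range f).ncard := by
    rw [← Set.image_univ, Set.ncard_image_of_injective _ hf, Set.ncard_univ, Nat.card_coe_set_eq]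
  rw [h1]
  apply Set.ncard_le_ncard _ (Set.toFinite _)
  rintro _ ⟨x, rfl⟩
  exact key x

theorem aux_sep {α : Type} [Fintype α] (G : SimpleGraph α) (c η : ℝ)
    (h : ∀ H : G.Subgraph, ∃ X : Set α, X ⊆ H.verts ∧
          ((X.ncard : ℝ) ≤ c * (H.verts.ncard : ℝ) ^ η) ∧
          ∀ K : (H.deleteVerts X).coe.ConnectedComponent,
            3 * K.supp.ncard ≤ 2 * H.verts.ncard) (A : Set α) :
    ∃ X : Set α, ((X.ncard : ℝ) ≤ c * (A.ncard : ℝ) ^ η) ∧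
      ∀ T : Set α, T ⊆ A \ X → (G.induce T).Preconnected → 3 * T.ncard ≤ 2 * A.ncard := by
  classical
  obtain ⟨X, hX, hc, hK⟩ := h ((⊤ : G.Subgraph).induce A)
  refine ⟨X, hc, ?_⟩
  intro T hT hp
  rcases T.eq_empty_or_nonempty with rfl | hne
  · simp
  let f : G.induce T →g (((⊤ : G.Subgraph).induce A).deleteVerts X).coe :=
    { toFun := fun x => ⟨x.1, hT x.2⟩
      map_rel' := by
        intro a b hab
        have h1 := hT a.2
        have h2 := hT b.2
        have h3 : G.Adj a b := hab
        simp [SimpleGraph.Subgraph.deleteVerts_adj, h1.1, h1.2, h2.1, h2.2, h3] }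
  have hf : Function.Injective f := by
    intro a b hab
    have : a.1 = b.1 := congrArg (fun z => z.1) hab
    exact Subtype.ext this
  haveI : Fintype ↑(((⊤ : G.Subgraph).induce A).deleteVerts X).verts := Fintype.ofFinite _
  obtain ⟨K, -, hle⟩ := aux_hom G T hp hne _ f hf
  have := hK K
  simp only [SimpleGraph.Subgraph.induce_verts] at this
  omega

theorem aux_sum {β : Type} [Fintype β] (G : SimpleGraph β) [Fintype G.ConnectedComponent] :
    ∑ K : G.ConnectedComponent, K.supp.ncard = Fintype.card β := by
  classical
  rw [← Finset.card_univ, Finset.card_eq_sum_card_fiberwise (f := G.connectedComponentMk)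
    (t := Finset.univ) (by simp)]
  apply Finset.sum_congr rfl
  intro K _
  rw [← Set.ncard_coe_finset]
  congr 1
  ext v
  simp

theorem aux_comp {α : Type} (G : SimpleGraph α) (U : Set α)
    (K : (G.induce U).ConnectedComponent) :
    (G.induce (Subtype.val '' K.supp : Set α)).Preconnected := by
  have h := K.connected_toSimpleGraph.preconnected
  let f : K.toSimpleGraph →g G.induce (Subtype.val '' K.supp : Set α) :=
    { toFun := fun x => ⟨x.1.1, x.1, x.2, rfl⟩
      map_rel' := fun {a b} hab => hab }
  refine h.map f ?_
  rintro ⟨_, x, hx, rfl⟩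
  exact ⟨⟨x, hx⟩, rfl⟩

theorem aux_step {α : Type} [Fintype α] (G : SimpleGraph α) (c η : ℝ) (hc : 0 < c) (hη1 : η < 1)
    (h : ∀ A : Set α, ∃ X : Set α, ((X.ncard : ℝ) ≤ c * (A.ncard : ℝ) ^ η) ∧
      ∀ T : Set α, T ⊆ A \ X → (G.induce T).Preconnected → 3 * T.ncard ≤ 2 * A.ncard)
    (s : ℝ) (hs : 0 < s) (S : Set α)
    (hS : ∀ T : Set α, T ⊆ Sᶜ → (G.induce T).Preconnected → (T.ncard : ℝ) ≤ 3 / 2 * s) :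
    ∃ S' : Set α, (S'.ncard : ℝ) ≤ S.ncard + c * s ^ (η - 1) * Fintype.card α ∧
      ∀ T : Set α, T ⊆ S'ᶜ → (G.induce T).Preconnected → (T.ncard : ℝ) ≤ s := by
  classical
  choose X hX1 hX2 using h
  let F : (G.induce Sᶜ).ConnectedComponent → Set α := fun K => Subtype.val '' K.supp
  have hF : ∀ K, (F K).ncard = K.supp.ncard := fun K =>
    Set.ncard_image_of_injective _ Subtype.val_injective
  let Y : (G.induce Sᶜ).ConnectedComponent → Set α := fun K =>
    if (s < (F K).ncard) then X (F K) else ∅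
  haveI : Fintype (G.induce Sᶜ).ConnectedComponent := Fintype.ofFinite _
  have hY : ∀ K, ((Y K).ncard : ℝ) ≤ c * s ^ (η - 1) * K.supp.ncard := by
    intro K
    by_cases hK : s < (F K).ncard
    · simp only [Y, if_pos hK]
      refine (hX1 (F K)).trans ?_
      rw [← hF K, mul_assoc]
      apply mul_le_mul_of_nonneg_left _ hc.le
      have hpos : (0 : ℝ) < (F K).ncard := hs.trans hK
      calc ((F K).ncard : ℝ) ^ η = ((F K).ncard : ℝ) ^ (η - 1) * (F K).ncard := by
            rw [← Real.rpow_add_one hpos.ne']; simp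
        _ ≤ _ := by
            apply mul_le_mul_of_nonneg_right _ hpos.le
            exact Real.rpow_le_rpow_of_nonpos hs hK.le (by linarith)
    · simp only [Y, if_neg hK, Set.ncard_empty, Nat.cast_zero]
      positivity
  refine ⟨S ∪ ⋃ K, Y K, ?_, ?_⟩
  · have h1 : (S ∪ ⋃ K, Y K).ncard ≤ S.ncard + ∑ K, (Y K).ncard := by
      refine (Set.ncard_union_le _ _).trans (Nat.add_le_add_left ?_ _)
      exact Set.ncard_iUnion_le_of_fintype Y
    have h2 : (∑ K, ((Y K).ncard : ℝ)) ≤ c * s ^ (η - 1) * Fintype.card α := by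
      refine (Finset.sum_le_sum (fun K _ => hY K)).trans ?_
      rw [← Finset.mul_sum]
      apply mul_le_mul_of_nonneg_left _ (by positivity)
      have := aux_sum (G.induce Sᶜ)
      rw [← Nat.cast_sum, this]
      exact_mod_cast Fintype.card_subtype_le _
    have h3 : ((S ∪ ⋃ K, Y K).ncard : ℝ) ≤ S.ncard + ∑ K, ((Y K).ncard : ℝ) := by exact_mod_cast h1
    linarith
  · intro T hT hp
    rcases T.eq_empty_or_nonempty with rfl | hne
    · simpa using hs.le
    have hTS : T ⊆ Sᶜ := fun x hx hxS => hT hx (Or.inl hxS)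
    let f : G.induce T →g G.induce Sᶜ :=
      { toFun := fun x => ⟨x.1, hTS x.2⟩
        map_rel' := fun {a b} hab => hab }
    have hf : Function.Injective f := by
      intro a b hab
      have : a.1 = b.1 := congrArg (fun z => z.1) hab
      exact Subtype.ext this
    obtain ⟨K, hKm, hle⟩ := aux_hom G T hp hne _ f hf
    have hle' : (T.ncard : ℝ) ≤ (F K).ncard := by rw [hF]; exact_mod_cast hle
    by_cases hK : s < (F K).ncard
    · have h1 : T ⊆ F K \ X (F K) := by
        intro x hx
        refine ⟨⟨f ⟨x, hx⟩, hKm _, rfl⟩, fun hxX => hT hx (Or.inr ?_)⟩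
        refine Set.mem_iUnion.2 ⟨K, ?_⟩
        simp only [Y, if_pos hK]
        exact hxX
      have h2 := hX2 _ T h1 hp
      have h2' : (3 : ℝ) * T.ncard ≤ 2 * (F K).ncard := by exact_mod_cast h2
      have h3 := hS (F K) (by rintro _ ⟨x, -, rfl⟩; exact x.2) (aux_comp G _ K)
      linarith
    · linarith

theorem aux_main {α : Type} [Fintype α] (G : SimpleGraph α) (c η : ℝ) (hc : 0 < c) (hη1 : η < 1)
    (h : ∀ A : Set α, ∃ X : Set α, ((X.ncard : ℝ) ≤ c * (A.ncard : ℝ) ^ η) ∧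
      ∀ T : Set α, T ⊆ A \ X → (G.induce T).Preconnected → 3 * T.ncard ≤ 2 * A.ncard)
    (q : ℝ) (hq : q = (3 / 2 : ℝ) ^ (η - 1)) (hq1 : q < 1) (hq0 : 0 < q) (i : ℕ) :
    ∃ S : Set α, (S.ncard : ℝ) ≤ c / (1 - q) * q ^ i * Fintype.card α ∧
      ∀ T : Set α, T ⊆ Sᶜ → (G.induce T).Preconnected → (T.ncard : ℝ) ≤ (3 / 2) ^ i := by
  have h1q : 0 < 1 - q := by linarith
  obtain ⟨N, hN⟩ := pow_unbounded_of_one_lt (Fintype.card α : ℝ) (by norm_num : (1 : ℝ) < 3 / 2)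
  have big : ∀ i, N ≤ i → ∃ S : Set α, (S.ncard : ℝ) ≤ c / (1 - q) * q ^ i * Fintype.card α ∧
      ∀ T : Set α, T ⊆ Sᶜ → (G.induce T).Preconnected → (T.ncard : ℝ) ≤ (3 / 2) ^ i := by
    intro i hi
    refine ⟨∅, by simp; positivity, fun T _ _ => ?_⟩
    have h1 : (T.ncard : ℝ) ≤ Fintype.card α := by
      rw [← Nat.card_eq_fintype_card]
      exact_mod_cast Set.ncard_le_card T
    have h2 : (3 / 2 : ℝ) ^ N ≤ (3 / 2) ^ i := pow_le_pow_right₀ (by norm_num) hi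
    linarith
  rcases le_total N i with hi | hi
  · exact big i hi
  · induction hi using Nat.decreasingInduction with
    | self => exact big N le_rfl
    | of_succ k hk ih =>
      obtain ⟨S, hS1, hS2⟩ := ih
      obtain ⟨S', h1, h2⟩ := aux_step G c η hc hη1 h ((3 / 2) ^ k) (by positivity) S
        (fun T hT hp => (hS2 T hT hp).trans (by rw [pow_succ]; linarith))
      refine ⟨S', h1.trans ?_, h2⟩
      have e : ((3 / 2 : ℝ) ^ k) ^ (η - 1) = q ^ k := by
        rw [hq, ← Real.rpow_natCast, ← Real.rpow_natCast, ← Real.rpow_mul (by norm_num),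
          ← Real.rpow_mul (by norm_num), mul_comm]
      rw [e]
      have : c / (1 - q) * q ^ k * Fintype.card α
        = c / (1 - q) * q ^ (k + 1) * Fintype.card α + c * q ^ k * Fintype.card α := by
        field_simp
        ring
      linarith


/-- for all `c > 0` and `0 ≤ η < 1` there is a constant `C`
(depending only on `c` and `η`) such that: for every finite graph `G` all of
whose subgraphs `H` admit a balanced separator of size at most `c·|V(H)|^η`
(i.e. a set `X ⊆ V(H)` such that every connected component of `H − X` has at
most `2|V(H)|/3` vertices), and for every `β ∈ (0,1]`, there is a set
`S ⊆ V(G)` with `|S| ≤ β·n` such that every connected component of `G − S` has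
at most `(C/β)^{1/(1−η)}` vertices. -/
theorem stmt18 (c η : ℝ) (hc : 0 < c) (hη0 : 0 ≤ η) (hη1 : η < 1) :
    ∃ C : ℝ, 0 < C ∧
      ∀ (α : Type) (_ : Fintype α) (G : SimpleGraph α),
        (∀ H : G.Subgraph, ∃ X : Set α, X ⊆ H.verts ∧
          ((X.ncard : ℝ) ≤ c * (H.verts.ncard : ℝ) ^ η) ∧
          ∀ K : (H.deleteVerts X).coe.ConnectedComponent,
            3 * K.supp.ncard ≤ 2 * H.verts.ncard) →
        ∀ β : ℝ, 0 < β → β ≤ 1 →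
          ∃ S : Set α, ((S.ncard : ℝ) ≤ β * (Fintype.card α : ℝ)) ∧
            ∀ K : (G.induce Sᶜ).ConnectedComponent,
              (K.supp.ncard : ℝ) ≤ (C / β) ^ ((1 : ℝ) / (1 - η)) := by
  obtain ⟨q, hq⟩ : ∃ q : ℝ, q = (3 / 2 : ℝ) ^ (η - 1) := ⟨_, rfl⟩
  have hq0 : 0 < q := by rw [hq]; positivity
  have hq1 : q < 1 := by
    rw [hq]; exact Real.rpow_lt_one_of_one_lt_of_neg (by norm_num) (by linarith)
  have h1q : 0 < 1 - q := by linarith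
  have h1η : 0 < 1 - η := by linarith
  have hD : 0 < c / (1 - q) := by positivity
  refine ⟨max 1 (c / (1 - q) / q), by positivity, ?_⟩
  intro α _ G hG β hβ hβ1
  have hex : ∃ i : ℕ, c / (1 - q) * q ^ i ≤ β := by
    obtain ⟨i, hi⟩ := exists_pow_lt_of_lt_one (show 0 < β / (c / (1 - q)) by positivity) hq1
    refine ⟨i, ?_⟩
    rw [lt_div_iff₀ hD] at hi
    linarith
  classical
  obtain ⟨i, hi, hmin⟩ : ∃ i : ℕ, c / (1 - q) * q ^ i ≤ β ∧
      ∀ j < i, ¬ c / (1 - q) * q ^ j ≤ β :=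
    ⟨Nat.find hex, Nat.find_spec hex, fun j hj => Nat.find_min hex hj⟩
  obtain ⟨S, hS1, hS2⟩ := aux_main G c η hc hη1 (aux_sep G c η hG) q hq hq1 hq0 i
  refine ⟨S, hS1.trans (mul_le_mul_of_nonneg_right hi (by positivity)), ?_⟩
  intro K
  have h1 := hS2 (Subtype.val '' K.supp) (by rintro _ ⟨x, -, rfl⟩; exact x.2) (aux_comp G _ K)
  rw [Set.ncard_image_of_injective _ Subtype.val_injective] at h1
  refine h1.trans ?_
  have key : (q⁻¹) ^ i ≤ max 1 (c / (1 - q) / q) / β := by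
    rw [le_div_iff₀ hβ]
    rcases i with _ | j
    · simp; left; exact hβ1
    · refine le_trans ?_ (le_max_right _ _)
      have := (not_le.1 (hmin j (Nat.lt_succ_self j))).le
      rw [le_div_iff₀ hq0]
      calc q⁻¹ ^ (j + 1) * β * q ≤ q⁻¹ ^ (j + 1) * (c / (1 - q) * q ^ j) * q := by gcongr
        _ = c / (1 - q) := by
          rw [inv_pow]; field_simp; ring
  have e : (3 / 2 : ℝ) ^ i = ((q⁻¹) ^ i) ^ ((1 : ℝ) / (1 - η)) := by
    rw [hq, ← Real.rpow_neg (by norm_num), ← Real.rpow_natCast, ← Real.rpow_natCast,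
      ← Real.rpow_mul (by positivity), ← Real.rpow_mul (by positivity)]
    congr 1
    field_simp
    ring
  rw [e]
  exact Real.rpow_le_rpow (by positivity) key (by positivity)
end
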